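/- arXiv:1208.6328 — 2 statements merged into one kernel-verified Lean document; each statement's English description precedes it below -/
import Mathlib

section
/- Let 1 ≤ p ≤ ∞ and α satisfy: 1/2 < α ≤ 1 if p = 1; 1 − 1/(2p) < α < 3/2 − 1/(2p) if 1 < p < ∞; 1 ≤ α < 3/2 if p = ∞. Then there is a constant C, independent of f and t, such that for every f with ‖f(x)(1−x²)^α‖_{L^p[−1,1]} < ∞ and every t ∈ (−π, π), ‖T̂_t(f,·)(x)(1−x²)^α‖_{L^p} ≤ (C / cos⁴(t/2)) · ‖f(x)(1−x²)^α‖_{L^p}, where T̂_t(f,x) = T_{cos t}(f,x). -/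
open MeasureTheory Real Set
open scoped ENNReal

noncomputable section

/-- `R = x y − z √(1−x²) √(1−y²)`. -/
def Rker (x y z : ℝ) : ℝ := x * y - z * Real.sqrt (1 - x ^ 2) * Real.sqrt (1 - y ^ 2)

/-- The kernel `B_y(x, z, R)` of the asymmetric generalised translation operator. -/
def Bker (y x z : ℝ) : ℝ :=
  2 * (Real.sqrt (1 - x ^ 2) * y + z * x * Real.sqrt (1 - y ^ 2) +
      Real.sqrt (1 - x ^ 2) * (1 - y) * (1 - z ^ 2)) ^ 2 - (1 - Rker x y z ^ 2)

/-- The asymmetric generalised translation operator `T_y(f, x)`. -/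
def Tgen (y : ℝ) (f : ℝ → ℝ) (x : ℝ) : ℝ :=
  (4 / (Real.pi * (1 - x ^ 2) * (1 + y) ^ 2)) *
    ∫ z in (-1 : ℝ)..1, Bker y x z * f (Rker x y z) / Real.sqrt (1 - z ^ 2)

/-- The Jacobi differential operator `D_{x,2,2} = (1−x²) d²/dx² − 6x d/dx`. -/
def Dop (f : ℝ → ℝ) (x : ℝ) : ℝ := (1 - x ^ 2) * deriv (deriv f) x - 6 * x * deriv f x

/-- Weighted `L^p` norm `‖f(x) (1−x²)^α‖_p` on `[−1,1]`. -/
def wnorm (p : ℝ≥0∞) (α : ℝ) (f : ℝ → ℝ) : ℝ≥0∞ :=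
  eLpNorm (fun x => f x * (1 - x ^ 2) ^ α) p (volume.restrict (Set.Icc (-1 : ℝ) 1))

/-- `h` is absolutely continuous on every closed subinterval of `(−1,1)`:
it is the integral of its derivative there. -/
def LocAC (h : ℝ → ℝ) : Prop :=
  ∀ a b : ℝ, -1 < a → a ≤ b → b < 1 →
    IntervalIntegrable (deriv h) MeasureTheory.volume a b ∧
      ∀ x ∈ Set.Icc a b, h x = h a + ∫ t in a..x, deriv h t

/-- The system `P` consists of the Jacobi polynomials for the weight `(1−x)^a (1+x)^b`,
normalised by `P n 1 = 1`. -/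
def IsJacobiSystem (a b : ℝ) (P : ℕ → ℝ → ℝ) : Prop :=
  (∀ n : ℕ, ∃ q : Polynomial ℝ, q.natDegree = n ∧ ∀ x, P n x = q.eval x) ∧
  (∀ m n : ℕ, m ≠ n →
    ∫ x in (-1 : ℝ)..1, P m x * P n x * (1 - x) ^ a * (1 + x) ^ b = 0) ∧
  (∀ n : ℕ, P n 1 = 1)

/-- Conditions on `p` and `α` in the main theorems. -/
def ParamOK (p : ℝ≥0∞) (α : ℝ) : Prop :=
  1 ≤ p ∧
  (p = 1 → 1 / 2 < α ∧ α ≤ 1) ∧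
  (1 < p → p ≠ ⊤ → 1 - 1 / (2 * p.toReal) < α ∧ α < 3 / 2 - 1 / (2 * p.toReal)) ∧
  (p = ⊤ → 1 ≤ α ∧ α < 3 / 2)

/-- Best approximation of `f` by algebraic polynomials of degree at most `n − 1`. -/
def bestE (p : ℝ≥0∞) (α : ℝ) (n : ℕ) (f : ℝ → ℝ) : ℝ≥0∞ :=
  ⨅ (q : Polynomial ℝ) (_ : q.natDegree ≤ n - 1), wnorm p α (fun x => f x - q.eval x)

/-- The generalised modulus of smoothness `ω(f, δ)`. -/
def wmod (p : ℝ≥0∞) (α : ℝ) (f : ℝ → ℝ) (δ : ℝ) : ℝ≥0∞ :=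
  ⨆ t ∈ Set.Icc (-δ) δ, wnorm p α (fun x => Tgen (Real.cos t) f x - f x)

/-- The Peetre K-functional between `L^p_α` and the weighted Sobolev-type space. -/
def Kfun (p : ℝ≥0∞) (α : ℝ) (f : ℝ → ℝ) (δ : ℝ) : ℝ≥0∞ :=
  ⨅ (g : ℝ → ℝ) (_ : LocAC (deriv g) ∧ wnorm p α g < ⊤ ∧ wnorm p α (Dop g) < ⊤),
    wnorm p α (fun x => f x - g x) + ENNReal.ofReal (δ ^ 2) * wnorm p α (Dop g)


/-- the Chebyshev weight -/
def wz (z : ℝ) : ℝ≥0∞ := ENNReal.ofReal (Real.sqrt (1 - z ^ 2))⁻¹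

/-- power weight -/
def Vw (a r : ℝ) : ℝ≥0∞ := ENNReal.ofReal ((1 - r ^ 2) ^ a)

lemma wz_meas : Measurable wz := by unfold wz; fun_prop

lemma Vw_meas (a : ℝ) : Measurable (Vw a) := by unfold Vw; fun_prop

lemma wz_zero {z : ℝ} (h : ¬ (z ∈ Ioo (-1 : ℝ) 1)) : wz z = 0 := by
  have : 1 - z ^ 2 ≤ 0 := by
    by_contra hc
    exact h ⟨by nlinarith, by nlinarith⟩
  simp [wz, Real.sqrt_eq_zero_of_nonpos this]

lemma one_sub_sq_pos {z : ℝ} (h : z ∈ Ioo (-1 : ℝ) 1) : 0 < 1 - z ^ 2 := by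
  nlinarith [h.1, h.2]

lemma Rmeas (x y : ℝ) : Measurable (Rker x y) := by unfold Rker; fun_prop

lemma map_R {x y : ℝ} (hx : x ∈ Ioo (-1 : ℝ) 1) (hy : y ∈ Ioo (-1 : ℝ) 1) :
    Measure.map (Rker x y) volume =
      ENNReal.ofReal (√(1 - x ^ 2) * √(1 - y ^ 2))⁻¹ • (volume : Measure ℝ) := by
  have hd : 0 < √(1 - x ^ 2) * √(1 - y ^ 2) :=
    mul_pos (Real.sqrt_pos.2 (one_sub_sq_pos hx)) (Real.sqrt_pos.2 (one_sub_sq_pos hy))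
  have h1 : Rker x y = (fun r => x * y - r) ∘ (fun z => z * (√(1 - x ^ 2) * √(1 - y ^ 2))) := by
    ext z; simp [Rker, mul_assoc]
  rw [h1, ← Measure.map_map (by fun_prop) (by fun_prop), Real.map_volume_mul_right hd.ne',
    Measure.map_smul,
    (Measure.measurePreserving_sub_left volume (x * y)).map_eq, abs_of_pos (inv_pos.2 hd)]

lemma qmp_R {x y : ℝ} (hx : x ∈ Ioo (-1 : ℝ) 1) (hy : y ∈ Ioo (-1 : ℝ) 1) :
    Measure.QuasiMeasurePreserving (Rker x y) volume volume := by
  refine ⟨Rmeas x y, ?_⟩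
  rw [map_R hx hy]
  exact Measure.smul_absolutelyContinuous

lemma R_id1 {x y z : ℝ} (hx : x ∈ Ioo (-1 : ℝ) 1) (hy : y ∈ Ioo (-1 : ℝ) 1) :
    (1 - x ^ 2) * (1 - z ^ 2) + (x * √(1 - y ^ 2) + z * √(1 - x ^ 2) * y) ^ 2
      = 1 - Rker x y z ^ 2 := by
  have h1 := Real.sq_sqrt (one_sub_sq_pos hx).le
  have h2 := Real.sq_sqrt (one_sub_sq_pos hy).le
  unfold Rker
  generalize √(1 - x ^ 2) = a at *
  generalize √(1 - y ^ 2) = b at *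
  linear_combination (z^2*y^2 + z^2*b^2) * h1 + (x^2 + z^2*(1 - x^2)) * h2

lemma R_id2 {x y z : ℝ} (hx : x ∈ Ioo (-1 : ℝ) 1) (hy : y ∈ Ioo (-1 : ℝ) 1) :
    (1 - y ^ 2) * (1 - z ^ 2) + (√(1 - x ^ 2) * y + z * x * √(1 - y ^ 2)) ^ 2
      = 1 - Rker x y z ^ 2 := by
  have h1 := Real.sq_sqrt (one_sub_sq_pos hx).le
  have h2 := Real.sq_sqrt (one_sub_sq_pos hy).le
  unfold Rker
  generalize √(1 - x ^ 2) = a at *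
  generalize √(1 - y ^ 2) = b at *
  linear_combination (y^2 + z^2*(1 - y^2)) * h1 + (z^2*x^2 + z^2*a^2) * h2

lemma R_ge {x y z : ℝ} (hx : x ∈ Ioo (-1 : ℝ) 1) (hy : y ∈ Ioo (-1 : ℝ) 1) :
    (1 - x ^ 2) * (1 - z ^ 2) ≤ 1 - Rker x y z ^ 2 := by
  rw [← R_id1 hx hy]; nlinarith [sq_nonneg (x * √(1 - y ^ 2) + z * √(1 - x ^ 2) * y)]

lemma R_mem {x y z : ℝ} (hx : x ∈ Ioo (-1 : ℝ) 1) (hy : y ∈ Ioo (-1 : ℝ) 1)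
    (hz : z ∈ Ioo (-1 : ℝ) 1) : Rker x y z ∈ Ioo (-1 : ℝ) 1 := by
  have := R_ge (z := z) hx hy
  have h2 := mul_pos (one_sub_sq_pos hx) (one_sub_sq_pos hz)
  constructor <;> nlinarith

lemma B_bound {x y z : ℝ} (hx : x ∈ Ioo (-1 : ℝ) 1) (hy : y ∈ Ioo (-1 : ℝ) 1)
    (hz : z ∈ Ioo (-1 : ℝ) 1) : |Bker y x z| ≤ 20 * (1 - Rker x y z ^ 2) := by
  have h1 := R_ge (z := z) hx hy
  have h2 := R_id2 (z := z) hx hy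
  have hz' := one_sub_sq_pos hz
  have hx' := one_sub_sq_pos hx
  have hy' := one_sub_sq_pos hy
  have hs := Real.sq_sqrt hx'.le
  have hxz := mul_pos hx' hz'
  have hyz := mul_pos hy' hz'
  unfold Bker
  set A := √(1 - x ^ 2) * y + z * x * √(1 - y ^ 2)
  set q := √(1 - x ^ 2) * (1 - y) * (1 - z ^ 2) with hq
  have hq2 : q ^ 2 ≤ 4 * (1 - Rker x y z ^ 2) := by
    have e : q ^ 2 = ((1 - x ^ 2) * (1 - z ^ 2)) * ((1 - y) ^ 2 * (1 - z ^ 2)) := by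
      rw [hq]; linear_combination (1 - y) ^ 2 * (1 - z ^ 2) ^ 2 * hs
    have e2 : (1 - y) ^ 2 * (1 - z ^ 2) ≤ 4 := by
      have : (1 - y) ^ 2 ≤ 4 := by nlinarith [hy.1, hy.2]
      nlinarith [sq_nonneg z, sq_nonneg (1 - y)]
    rw [e]; nlinarith
  rw [abs_le]
  constructor
  · nlinarith [sq_nonneg (A + q)]
  · nlinarith [sq_nonneg (A - q)]

/-- symmetric kernel -/
def kk (y x r : ℝ) : ℝ≥0∞ :=
  ENNReal.ofReal (√(1 - x ^ 2 - y ^ 2 - r ^ 2 + 2 * x * y * r))⁻¹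

lemma kk_symm (y x r : ℝ) : kk y x r = kk y r x := by
  unfold kk; congr 3; ring

lemma kk_zero {y x r : ℝ} (hy : y ∈ Ioo (-1 : ℝ) 1) (hx : x ∉ Ioo (-1 : ℝ) 1) :
    kk y x r = 0 := by
  have hx' : 1 - x ^ 2 ≤ 0 := by
    by_contra hc
    exact hx ⟨by nlinarith, by nlinarith⟩
  have : 1 - x ^ 2 - y ^ 2 - r ^ 2 + 2 * x * y * r ≤ 0 := by
    nlinarith [one_sub_sq_pos hy, sq_nonneg (x * y - r)]
  simp [kk, Real.sqrt_eq_zero_of_nonpos this]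

lemma cov {x y : ℝ} (hx : x ∈ Ioo (-1 : ℝ) 1) (hy : y ∈ Ioo (-1 : ℝ) 1)
    {h : ℝ → ℝ≥0∞} (hh : Measurable h) :
    ∫⁻ z, h (Rker x y z) * wz z = ∫⁻ r, h r * kk y x r := by
  have hkm : Measurable (kk y x) := by unfold kk; fun_prop
  have hd : 0 < √(1 - x ^ 2) * √(1 - y ^ 2) :=
    mul_pos (Real.sqrt_pos.2 (one_sub_sq_pos hx)) (Real.sqrt_pos.2 (one_sub_sq_pos hy))
  have e : ∀ z, wz z = ENNReal.ofReal (√(1 - x ^ 2) * √(1 - y ^ 2)) * kk y x (Rker x y z) := by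
    intro z
    have : 1 - x ^ 2 - y ^ 2 - (Rker x y z) ^ 2 + 2 * x * y * (Rker x y z)
        = (√(1 - x ^ 2) * √(1 - y ^ 2)) ^ 2 * (1 - z ^ 2) := by
      have h1 := Real.sq_sqrt (one_sub_sq_pos hx).le
      have h2 := Real.sq_sqrt (one_sub_sq_pos hy).le
      unfold Rker
      generalize √(1 - x ^ 2) = a at *
      generalize √(1 - y ^ 2) = b at *
      linear_combination (-(1 - y ^ 2)) * h1 - a ^ 2 * h2
    rw [wz, kk, this, Real.sqrt_mul (sq_nonneg _), Real.sqrt_sq hd.le, ← ENNReal.ofReal_mul hd.le]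
    congr 1
    rw [mul_inv, ← mul_assoc, mul_inv_cancel₀ hd.ne', one_mul]
  calc _ = ∫⁻ z, (fun r => ENNReal.ofReal (√(1 - x ^ 2) * √(1 - y ^ 2)) * (h r * kk y x r))
        (Rker x y z) := by
        congr 1; ext z; rw [e z]; ring
    _ = _ := by
        rw [← lintegral_map (f := fun r => ENNReal.ofReal (√(1 - x ^ 2) * √(1 - y ^ 2)) *
          (h r * kk y x r)) (by fun_prop) (Rmeas x y), map_R hx hy, lintegral_smul_measure,
          lintegral_const_mul _ (by fun_prop), smul_eq_mul, ← mul_assoc,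
          ← ENNReal.ofReal_mul (by positivity), inv_mul_cancel₀ hd.ne', ENNReal.ofReal_one, one_mul]

lemma selfadj {y : ℝ} (hy : y ∈ Ioo (-1 : ℝ) 1)
    {u h : ℝ → ℝ≥0∞} (hu : Measurable u) (hh : Measurable h) :
    ∫⁻ x in Ioo (-1 : ℝ) 1, u x * ∫⁻ z, h (Rker x y z) * wz z =
    ∫⁻ x in Ioo (-1 : ℝ) 1, h x * ∫⁻ z, u (Rker x y z) * wz z := by
  have key : ∀ {u h : ℝ → ℝ≥0∞} (hu : Measurable u) (hh : Measurable h),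
      ∫⁻ x in Ioo (-1 : ℝ) 1, u x * ∫⁻ z, h (Rker x y z) * wz z =
      ∫⁻ x, ∫⁻ r, u x * h r * kk y x r := by
    intro u h hu hh
    have hkm : ∀ x, Measurable (kk y x) := by intro x; unfold kk; fun_prop
    rw [← lintegral_indicator measurableSet_Ioo]
    congr 1; ext x
    by_cases hx : x ∈ Ioo (-1 : ℝ) 1
    · rw [indicator_of_mem hx, cov hx hy hh, ← lintegral_const_mul _ (by fun_prop)]
      simp only [mul_assoc]
    · rw [indicator_of_notMem hx]
      simp [kk_zero hy hx]
  rw [key hu hh, key hh hu, lintegral_lintegral_swap]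
  · congr 1; ext x; congr 1; ext r
    rw [kk_symm, mul_comm (u r)]
  · apply Measurable.aemeasurable
    unfold kk Function.uncurry
    fun_prop

lemma Vw_mul {a b r : ℝ} (hr : r ∈ Ioo (-1 : ℝ) 1) : Vw a r * Vw b r = Vw (a + b) r := by
  have h := one_sub_sq_pos hr
  unfold Vw
  rw [← ENNReal.ofReal_mul (by positivity), Real.rpow_add h]

lemma Vw_rpow {a q r : ℝ} (hr : r ∈ Ioo (-1 : ℝ) 1) (hq : 0 ≤ q) : Vw a r ^ q = Vw (a * q) r := by
  have h := one_sub_sq_pos hr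
  unfold Vw
  rw [ENNReal.ofReal_rpow_of_nonneg (by positivity) hq, Real.rpow_mul h.le]

lemma Vw_zero (r : ℝ) : Vw 0 r = 1 := by simp [Vw]

lemma V_le1 {x y z β : ℝ} (hβ : 0 ≤ β) (hx : x ∈ Ioo (-1 : ℝ) 1) (hy : y ∈ Ioo (-1 : ℝ) 1)
    (hz : z ∈ Ioo (-1 : ℝ) 1) : Vw β x ≤ Vw β (Rker x y z) * Vw (-β) z := by
  have h1 := one_sub_sq_pos hx
  have h2 := one_sub_sq_pos hz
  have h3 := one_sub_sq_pos (R_mem hx hy hz)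
  unfold Vw
  rw [← ENNReal.ofReal_mul (by positivity)]
  apply ENNReal.ofReal_le_ofReal
  rw [Real.rpow_neg h2.le, ← div_eq_mul_inv, le_div_iff₀ (by positivity),
    ← Real.mul_rpow h1.le h2.le]
  exact Real.rpow_le_rpow (by positivity) (R_ge hx hy) hβ

lemma V_le2 {x y z γ : ℝ} (hγ : 0 ≤ γ) (hx : x ∈ Ioo (-1 : ℝ) 1) (hy : y ∈ Ioo (-1 : ℝ) 1)
    (hz : z ∈ Ioo (-1 : ℝ) 1) : Vw (-γ) (Rker x y z) ≤ Vw (-γ) x * Vw (-γ) z := by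
  have h1 := one_sub_sq_pos hx
  have h2 := one_sub_sq_pos hz
  unfold Vw
  rw [← ENNReal.ofReal_mul (by positivity)]
  apply ENNReal.ofReal_le_ofReal
  rw [← Real.mul_rpow h1.le h2.le]
  exact Real.rpow_le_rpow_of_nonpos (by positivity) (R_ge hx hy) (by linarith)

/-- the Beta-type constant -/
def KK (γ : ℝ) : ℝ≥0∞ := ∫⁻ z, Vw (-γ) z * wz z

lemma KK_lt {γ : ℝ} (h0 : 0 ≤ γ) (h1 : γ < 1 / 2) : KK γ < ⊤ := by
  set s := γ + 1 / 2 with hs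
  have i1 : IntervalIntegrable (fun z : ℝ => (1 - z) ^ (-s)) volume (-1) 1 := by
    have := (intervalIntegral.intervalIntegrable_rpow' (r := -s) (a := 2) (b := 0)
      (by linarith)).comp_sub_left 1
    norm_num at this; exact this
  have i2 : IntervalIntegrable (fun z : ℝ => (1 + z) ^ (-s)) volume (-1) 1 := by
    have := (intervalIntegral.intervalIntegrable_rpow' (r := -s) (a := 0) (b := 2)
      (by linarith)).comp_add_left 1
    norm_num at this; exact this
  have i3 := (i1.add i2).1
  rw [integrableOn_Ioc_iff_integrableOn_Ioo] at i3
  refine lt_of_le_of_lt ?_ i3.hasFiniteIntegral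
  rw [← lintegral_indicator measurableSet_Ioo, KK]
  apply lintegral_mono
  intro z
  by_cases hz : z ∈ Ioo (-1 : ℝ) 1
  · have h := one_sub_sq_pos hz
    have ha : 0 < 1 - z := by linarith [hz.2]
    have hb : 0 < 1 + z := by linarith [hz.1]
    simp only [indicator_of_mem hz, Vw, wz]
    rw [← ENNReal.ofReal_mul (by positivity)]
    rw [Real.enorm_eq_ofReal (by positivity)]
    apply ENNReal.ofReal_le_ofReal
    have e : (1 - z ^ 2) ^ (-γ) * (√(1 - z ^ 2))⁻¹ = (1 - z ^ 2) ^ (-s) := by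
      rw [Real.sqrt_eq_rpow, ← Real.rpow_neg h.le, ← Real.rpow_add h, hs]; congr 1; ring
    rw [e]
    have p1 : 0 ≤ (1 - z) ^ (-s) := by positivity
    have p2 : 0 ≤ (1 + z) ^ (-s) := by positivity
    rcases le_total 0 z with h' | h'
    · have := Real.rpow_le_rpow_of_nonpos (z := -s) ha (show 1 - z ≤ 1 - z ^ 2 by nlinarith)
        (by linarith)
      linarith
    · have := Real.rpow_le_rpow_of_nonpos (z := -s) hb (show 1 + z ≤ 1 - z ^ 2 by nlinarith)
        (by linarith)
      linarith
  · simp [wz_zero hz]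

lemma hol {q γ : ℝ} (hq : 1 ≤ q) (h0 : 0 ≤ γ) (h1 : q = 1 → γ = 0)
    (h2 : 1 < q → γ * (q / (q - 1)) < 1 / 2) :
    ∃ C : ℝ≥0∞, C ≠ ⊤ ∧ ∀ h : ℝ → ℝ≥0∞, Measurable h →
      (∫⁻ z, h z * (Vw (-γ) z * wz z)) ^ q ≤ C * ∫⁻ z, h z ^ q * wz z := by
  rcases hq.eq_or_lt with rfl | hq1
  · refine ⟨1, by simp, fun h hh => ?_⟩
    simp [h1 rfl, Vw_zero]
  · have hc : q.HolderConjugate (q / (q - 1)) := Real.HolderConjugate.conjExponent hq1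
    set q' := q / (q - 1) with hq'
    refine ⟨(KK (γ * q') ^ (1 / q')) ^ q, ?_, fun h hh => ?_⟩
    · have := KK_lt (mul_nonneg h0 hc.symm.pos.le) (h2 hq1)
      exact ENNReal.rpow_ne_top_of_nonneg (by linarith)
        (ENNReal.rpow_ne_top_of_nonneg (one_div_nonneg.2 hc.symm.pos.le) this.ne)
    · have wd : ∀ F : ℝ → ℝ≥0∞, Measurable F → ∫⁻ z, F z * wz z
          = ∫⁻ z, F z ∂(volume.withDensity wz) := by
        intro F hF
        rw [lintegral_withDensity_eq_lintegral_mul _ wz_meas hF]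
        simp [mul_comm]
      have hV := Vw_meas (-γ)
      have H := ENNReal.lintegral_mul_le_Lp_mul_Lq (volume.withDensity wz) hc hh.aemeasurable
        hV.aemeasurable
      have e1 : ∫⁻ z, Vw (-γ) z ^ q' ∂(volume.withDensity wz) = KK (γ * q') := by
        rw [← wd _ (by fun_prop), KK]
        congr 1; ext z
        by_cases hz : z ∈ Ioo (-1 : ℝ) 1
        · rw [Vw_rpow hz hc.symm.pos.le, neg_mul]
        · simp [wz_zero hz]
      rw [e1, ← wd _ (by fun_prop), ← wd _ (by fun_prop)] at H
      calc _ ≤ ((∫⁻ z, h z ^ q * wz z) ^ (1 / q) * KK (γ * q') ^ (1 / q')) ^ q := by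
            refine ENNReal.rpow_le_rpow ?_ (by linarith)
            simpa only [Pi.mul_apply, mul_assoc] using H
        _ = _ := by
            rw [ENNReal.mul_rpow_of_nonneg _ _ (by linarith), ← ENNReal.rpow_mul,
              one_div_mul_cancel (by linarith), ENNReal.rpow_one, mul_comm]

/-- the weighted Legendre translation of `G` -/
def NN (β y : ℝ) (G : ℝ → ℝ≥0∞) (x : ℝ) : ℝ≥0∞ := Vw β x * ∫⁻ z, G (Rker x y z) * wz z

lemma NN_le {x y β : ℝ} (hβ : 0 ≤ β) (hx : x ∈ Ioo (-1 : ℝ) 1) (hy : y ∈ Ioo (-1 : ℝ) 1)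
    {G : ℝ → ℝ≥0∞} (hG : Measurable G) :
    NN β y G x ≤ ∫⁻ z, (G (Rker x y z) * Vw β (Rker x y z)) * (Vw (-β) z * wz z) := by
  have := Rmeas x y
  have := wz_meas
  rw [NN, ← lintegral_const_mul _ (by fun_prop)]
  apply lintegral_mono
  intro z
  by_cases hz : z ∈ Ioo (-1 : ℝ) 1
  · calc Vw β x * (G (Rker x y z) * wz z)
        ≤ (Vw β (Rker x y z) * Vw (-β) z) * (G (Rker x y z) * wz z) := by
          gcongr; exact V_le1 hβ hx hy hz
      _ = _ := by ring
  · simp [wz_zero hz]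

lemma core_fin {q β : ℝ} (hq : 1 ≤ q) (h1 : -1 / (2 * q) < β) (h2 : q = 1 → β ≤ 0)
    (h3 : 1 < q → β < 1 / 2 - 1 / (2 * q)) :
    ∃ C : ℝ≥0∞, C ≠ ⊤ ∧ ∀ y ∈ Ioo (-1 : ℝ) 1, ∀ G : ℝ → ℝ≥0∞, Measurable G →
      ∫⁻ x in Ioo (-1 : ℝ) 1, NN β y G x ^ q ≤ C * ∫⁻ x in Ioo (-1 : ℝ) 1, (G x * Vw β x) ^ q := by
  have q0 : 0 < q := by linarith
  have hwm := wz_meas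
  have hVm := Vw_meas
  rcases le_or_gt β 0 with hβ | hβ
  · obtain ⟨C, hC, H⟩ := hol (γ := 0) hq le_rfl (fun _ => rfl) (fun _ => by norm_num)
    have hb : -(β * q) < 1 / 2 := by
      rw [div_lt_iff₀ (by positivity)] at h1; linarith
    have hb0 : 0 ≤ -(β * q) := by nlinarith
    refine ⟨C * KK (-(β * q)), ENNReal.mul_ne_top hC (KK_lt hb0 hb).ne, fun y hy G hG => ?_⟩
    calc _ ≤ ∫⁻ x in Ioo (-1 : ℝ) 1, C * (Vw (β * q) x * ∫⁻ z, G (Rker x y z) ^ q * wz z) := by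
          apply setLIntegral_mono' measurableSet_Ioo
          intro x hx
          have := Rmeas x y
          have := H (fun z => G (Rker x y z)) (by fun_prop)
          simp only [neg_zero, Vw_zero, one_mul] at this
          rw [NN, ENNReal.mul_rpow_of_nonneg _ _ q0.le, Vw_rpow hx q0.le]
          calc _ ≤ Vw (β * q) x * (C * ∫⁻ z, G (Rker x y z) ^ q * wz z) := by gcongr
            _ = _ := by ring
      _ = C * ∫⁻ x in Ioo (-1 : ℝ) 1, (Vw (β * q) x * ∫⁻ z, G (Rker x y z) ^ q * wz z) := by
          rw [lintegral_const_mul' _ _ hC]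
      _ = C * ∫⁻ x in Ioo (-1 : ℝ) 1, (G x ^ q * ∫⁻ z, Vw (β * q) (Rker x y z) * wz z) := by
          rw [selfadj hy (h := fun x => G x ^ q) (hVm _) (by fun_prop)]
      _ ≤ C * ∫⁻ x in Ioo (-1 : ℝ) 1, KK (-(β * q)) * (G x * Vw β x) ^ q := by
          gcongr C * ?_
          apply setLIntegral_mono' measurableSet_Ioo
          intro x hx
          have : ∫⁻ z, Vw (β * q) (Rker x y z) * wz z ≤ Vw (β * q) x * KK (-(β * q)) := by
            rw [KK, ← lintegral_const_mul _ (by fun_prop)]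
            apply lintegral_mono
            intro z
            by_cases hz : z ∈ Ioo (-1 : ℝ) 1
            · have := V_le2 hb0 hx hy hz
              simp only [neg_neg] at this ⊢
              rw [← mul_assoc]
              gcongr
            · simp [wz_zero hz]
          calc _ ≤ G x ^ q * (Vw (β * q) x * KK (-(β * q))) := by gcongr
            _ = _ := by
              rw [ENNReal.mul_rpow_of_nonneg _ _ q0.le, Vw_rpow hx q0.le]; ring
      _ = _ := by rw [lintegral_const_mul' _ _ (KK_lt hb0 hb).ne, mul_assoc]
  · have hq1 : 1 < q := by
      rcases hq.eq_or_lt with h | h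
      · exact absurd (h2 h.symm) (not_le.2 hβ)
      · exact h
    have h3 := h3 hq1
    obtain ⟨C, hC, H⟩ := hol (γ := β) hq hβ.le (fun h => absurd h hq1.ne') (fun _ => by
      have : 1 / 2 - 1 / (2 * q) = (1 / 2) * ((q - 1) / q) := by field_simp
      rw [this] at h3
      have hp : 0 < q / (q - 1) := div_pos q0 (by linarith)
      calc β * (q / (q - 1)) < (1 / 2) * ((q - 1) / q) * (q / (q - 1)) := by gcongr
        _ = 1 / 2 := by
          have : q - 1 ≠ 0 := by linarith
          field_simp)
    have hK := (KK_lt (γ := 0) le_rfl (by norm_num)).ne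
    refine ⟨C * KK 0, ENNReal.mul_ne_top hC hK, fun y hy G hG => ?_⟩
    have hbm := hVm β
    calc _ ≤ ∫⁻ x in Ioo (-1 : ℝ) 1, C * (1 * ∫⁻ z, (G (Rker x y z) * Vw β (Rker x y z)) ^ q
              * wz z) := by
          apply setLIntegral_mono' measurableSet_Ioo
          intro x hx
          have := Rmeas x y
          have := H (fun z => G (Rker x y z) * Vw β (Rker x y z)) (by fun_prop)
          rw [one_mul]
          exact (ENNReal.rpow_le_rpow (NN_le hβ.le hx hy hG) q0.le).trans this
      _ = C * ∫⁻ x in Ioo (-1 : ℝ) 1, (G x * Vw β x) ^ q * ∫⁻ z, 1 * wz z := by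
          rw [lintegral_const_mul' _ _ hC,
            selfadj hy (u := fun _ => 1) (h := fun x => (G x * Vw β x) ^ q)
            (by fun_prop) (by fun_prop)]
      _ = _ := by
          have : ∫⁻ z, 1 * wz z = KK 0 := by simp [KK, Vw_zero]
          rw [this, lintegral_mul_const' _ _ hK]; ring

lemma core_top {β : ℝ} (h0 : 0 ≤ β) {y : ℝ} (hy : y ∈ Ioo (-1 : ℝ) 1)
    {G : ℝ → ℝ≥0∞} (hG : Measurable G) {M : ℝ≥0∞}
    (hM : ∀ᵐ x, x ∈ Ioo (-1 : ℝ) 1 → G x * Vw β x ≤ M) {x : ℝ} (hx : x ∈ Ioo (-1 : ℝ) 1) :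
    NN β y G x ≤ KK β * M := by
  refine (NN_le h0 hx hy hG).trans ?_
  have hwm := wz_meas
  have hVm := Vw_meas (-β)
  rw [KK, ← lintegral_mul_const _ (by fun_prop)]
  apply lintegral_mono_ae
  filter_upwards [(qmp_R hx hy).ae hM] with z hz
  by_cases hz' : z ∈ Ioo (-1 : ℝ) 1
  · rw [mul_comm]
    gcongr
    exact hz (R_mem hx hy hz')
  · simp [wz_zero hz']

lemma core {p : ℝ≥0∞} {α : ℝ} (hpα : ParamOK p α) :
    ∃ C : ℝ≥0∞, C ≠ ⊤ ∧ ∀ y ∈ Ioo (-1 : ℝ) 1, ∀ G : ℝ → ℝ≥0∞, Measurable G →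
      eLpNorm (NN (α - 1) y G) p (volume.restrict (Ioo (-1 : ℝ) 1)) ≤
        C * eLpNorm (fun x => G x * Vw (α - 1) x) p (volume.restrict (Ioo (-1 : ℝ) 1)) := by
  obtain ⟨hp1, ha, hb, hc⟩ := hpα
  by_cases hp : p = ⊤
  · obtain ⟨hc1, hc2⟩ := hc hp
    subst hp
    refine ⟨KK (α - 1), (KK_lt (by linarith) (by linarith)).ne, fun y hy G hG => ?_⟩
    rw [eLpNorm_exponent_top, eLpNorm_exponent_top]
    refine essSup_le_of_ae_le _ ?_
    rw [Filter.EventuallyLE, ae_restrict_iff' measurableSet_Ioo]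
    refine Filter.Eventually.of_forall fun x hx => ?_
    refine core_top (by linarith) hy hG ?_ hx
    rw [← ae_restrict_iff' measurableSet_Ioo]
    exact ae_le_eLpNormEssSup (f := fun x => G x * Vw (α - 1) x)
  · have hp0 : p ≠ 0 := by rintro rfl; simp at hp1
    set q := p.toReal with hq
    have hq1 : 1 ≤ q := by
      rw [hq, ← ENNReal.toReal_one]
      exact ENNReal.toReal_mono hp hp1
    have q0 : 0 < q := by linarith
    have hqp : q = 1 → p = 1 := by
      intro h
      rw [← ENNReal.ofReal_toReal hp, ← hq, h]; simp
    have hqp' : 1 < q → 1 < p := by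
      intro h
      rcases hp1.eq_or_lt with h' | h'
      · rw [hq, ← h'] at h; simp at h
      · exact h'
    have e : 1 - 1 / (2 * q) = 1 + -1 / (2 * q) := by ring
    obtain ⟨C, hC, H⟩ := core_fin (q := q) (β := α - 1) hq1
      (by
        rcases hq1.eq_or_lt with h | h
        · have := ha (hqp h.symm)
          rw [← h]; linarith
        · have := (hb (hqp' h) hp).1
          linarith)
      (fun h => by have := ha (hqp h); linarith)
      (fun h => by have := (hb (hqp' h) hp).2; linarith)
    refine ⟨C ^ (1 / q), ENNReal.rpow_ne_top_of_nonneg (by positivity) hC, fun y hy G hG => ?_⟩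
    rw [eLpNorm_eq_lintegral_rpow_enorm_toReal hp0 hp, eLpNorm_eq_lintegral_rpow_enorm_toReal hp0 hp,
      ← ENNReal.mul_rpow_of_nonneg _ _ (by positivity)]
    exact ENNReal.rpow_le_rpow (H y hy G hG) (by positivity)

lemma poly_fin {c4 : ℝ} (h : c4 ≠ 0) (c3 c2 c1 c0 : ℝ) :
    {z : ℝ | c4 * z ^ 4 + c3 * z ^ 3 + c2 * z ^ 2 + c1 * z + c0 = 0}.Finite := by
  let P : Polynomial ℝ := Polynomial.C c4 * Polynomial.X ^ 4 + Polynomial.C c3 * Polynomial.X ^ 3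
    + Polynomial.C c2 * Polynomial.X ^ 2 + Polynomial.C c1 * Polynomial.X + Polynomial.C c0
  have hP : P ≠ 0 := by
    intro h0
    have h4 : P.coeff 4 = 0 := by rw [h0]; simp
    simp [P, Polynomial.coeff_X_pow] at h4
    exact h h4
  refine (Polynomial.finite_setOfPred_isRoot hP).subset ?_
  intro z hz
  change P.eval z = 0
  have hz' : c4 * z ^ 4 + c3 * z ^ 3 + c2 * z ^ 2 + c1 * z + c0 = 0 := hz
  simpa [P] using hz'

lemma eLp_mul {ε : Type*} [TopologicalSpace ε] [ESeminormedAddMonoid ε] {f : ℝ → ℝ} {g : ℝ → ε}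
    {μ : Measure ℝ} {c : ℝ} (p : ℝ≥0∞) (h : ∀ᵐ x ∂μ, ‖f x‖ₑ ≤ ENNReal.ofReal c * ‖g x‖ₑ) :
    eLpNorm f p μ ≤ ENNReal.ofReal c * eLpNorm g p μ :=
  eLpNorm_le_mul_eLpNorm_of_ae_le_mul' h p

lemma B_ne_ae {x y : ℝ} (hx : x ∈ Ioo (-1 : ℝ) 1) (hy : y ∈ Ioo (-1 : ℝ) 1) :
    ∀ᵐ z, Bker y x z ≠ 0 := by
  have ha : 0 < √(1 - x ^ 2) := Real.sqrt_pos.2 (one_sub_sq_pos hx)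
  set a := √(1 - x ^ 2) with hadef
  set b := √(1 - y ^ 2) with hbdef
  have hfin : {z | Bker y x z = 0}.Finite := by
    have hc : 2 * (a * (1 - y)) ^ 2 ≠ 0 := by
      have : 0 < 1 - y := by linarith [hy.2]
      positivity
    refine (poly_fin hc (-4 * (a * (1 - y)) * (x * b))
      (2 * ((x * b) ^ 2 - 2 * (a * (1 - y)) * (a * y + a * (1 - y))) + (a * b) ^ 2)
      (4 * (x * b) * (a * y + a * (1 - y)) - 2 * (x * y) * (a * b))
      (2 * (a * y + a * (1 - y)) ^ 2 - 1 + (x * y) ^ 2)).subset ?_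
    intro z hz
    have hz' : Bker y x z = 0 := hz
    simp only [Bker, Rker, ← hadef, ← hbdef] at hz'
    change _ = _
    rw [← hz']
    ring
  have := hfin.measure_zero volume
  rw [ae_iff]
  simpa using this

lemma f_aem {x y : ℝ} (hx : x ∈ Ioo (-1 : ℝ) 1) (hy : y ∈ Ioo (-1 : ℝ) 1) {f : ℝ → ℝ}
    (hi : IntervalIntegrable (fun z => Bker y x z * f (Rker x y z) / √(1 - z ^ 2)) volume (-1) 1) :
    AEMeasurable f (volume.restrict
      (Ioo (Rker x y 1) (Rker x y (-1)))) := by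
  have hd : 0 < √(1 - x ^ 2) * √(1 - y ^ 2) :=
    mul_pos (Real.sqrt_pos.2 (one_sub_sq_pos hx)) (Real.sqrt_pos.2 (one_sub_sq_pos hy))
  have h1 := hi.1
  rw [integrableOn_Ioc_iff_integrableOn_Ioo] at h1
  have h2 := h1.aemeasurable
  have hB : Measurable (Bker y x) := by unfold Bker Rker; fun_prop
  have h3 : AEMeasurable (fun z => f (Rker x y z)) (volume.restrict (Ioo (-1 : ℝ) 1)) := by
    have h4 : AEMeasurable (fun z => Bker y x z * f (Rker x y z) / √(1 - z ^ 2)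
        * (√(1 - z ^ 2) / Bker y x z)) (volume.restrict (Ioo (-1 : ℝ) 1)) :=
      h2.mul (Measurable.aemeasurable (by fun_prop))
    refine h4.congr ?_
    filter_upwards [ae_restrict_mem measurableSet_Ioo, ae_restrict_of_ae (B_ne_ae hx hy)]
      with z hz hb
    have : √(1 - z ^ 2) ≠ 0 := (Real.sqrt_pos.2 (one_sub_sq_pos hz)).ne'
    field_simp
  rw [← aemeasurable_indicator_iff measurableSet_Ioo] at h3 ⊢
  set d := √(1 - x ^ 2) * √(1 - y ^ 2) with hdd
  have hR : ∀ z, Rker x y z = x * y - z * d := by intro z; rw [Rker, hdd, mul_assoc]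
  have hq : Measure.QuasiMeasurePreserving (fun r : ℝ => (x * y - r) * d⁻¹) volume volume := by
    refine ⟨by fun_prop, ?_⟩
    have : (fun r : ℝ => (x * y - r) * d⁻¹) = (fun s => s * d⁻¹) ∘ (fun r => x * y - r) := rfl
    rw [this, ← Measure.map_map (by fun_prop) (by fun_prop),
      (Measure.measurePreserving_sub_left volume (x * y)).map_eq,
      Real.map_volume_mul_right (inv_ne_zero hd.ne')]
    exact Measure.smul_absolutelyContinuous
  have h5 := h3.comp_quasiMeasurePreserving hq
  convert h5 using 1
  ext r
  have hr : Rker x y ((x * y - r) * d⁻¹) = r := by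
    rw [hR]; field_simp; ring
  have hiff : r ∈ Ioo (Rker x y 1) (Rker x y (-1)) ↔ (x * y - r) * d⁻¹ ∈ Ioo (-1 : ℝ) 1 := by
    rw [hR, hR, ← div_eq_mul_inv, mem_Ioo, mem_Ioo, lt_div_iff₀ hd, div_lt_iff₀ hd]
    constructor <;> rintro ⟨u, v⟩ <;> constructor <;> linarith
  by_cases h : r ∈ Ioo (Rker x y 1) (Rker x y (-1))
  · simp only [Function.comp_apply]
    rw [indicator_of_mem h, indicator_of_mem (hiff.1 h), hr]
  · simp only [Function.comp_apply]
    rw [indicator_of_notMem h, indicator_of_notMem (fun h' => h (hiff.2 h'))]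

lemma prelim {y : ℝ} (hy : y ∈ Ioo (-1 : ℝ) 1) (f : ℝ → ℝ) :
    ∃ g : ℝ → ℝ≥0∞, Measurable g ∧ (∀ᵐ r, g r ≤ ‖f r‖ₑ) ∧ ∀ x ∈ Ioo (-1 : ℝ) 1,
      ‖Tgen y f x‖ₑ ≤ ENNReal.ofReal (4 / (π * (1 - x ^ 2) * (1 + y) ^ 2)) *
        ∫⁻ z, ENNReal.ofReal |Bker y x z| * g (Rker x y z) * wz z := by
  let S : ℚ × ℚ → Set ℝ := fun ab =>
    {r | r ∈ Ioo (ab.1 : ℝ) ab.2 ∧ AEMeasurable f (volume.restrict (Ioo (ab.1 : ℝ) ab.2))}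
  have hS : ∀ ab, MeasurableSet (S ab) ∧ AEMeasurable f (volume.restrict (S ab)) := by
    intro ab
    by_cases h : AEMeasurable f (volume.restrict (Ioo (ab.1 : ℝ) ab.2))
    · have : S ab = Ioo (ab.1 : ℝ) ab.2 := by ext r; simp only [S, mem_ofPred_eq, h, and_true]
      rw [this]; exact ⟨measurableSet_Ioo, h⟩
    · have : S ab = ∅ := by ext r; simp only [S, mem_ofPred_eq, h, and_false]; rfl
      rw [this]; simp
  have hU : MeasurableSet (⋃ ab, S ab) := MeasurableSet.iUnion fun ab => (hS ab).1
  have hUm : AEMeasurable f (volume.restrict (⋃ ab, S ab)) :=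
    aemeasurable_iUnion_iff.2 fun ab => (hS ab).2
  rw [← aemeasurable_indicator_iff hU] at hUm
  set U := ⋃ ab, S ab with hUdef
  refine ⟨fun r => ‖hUm.mk _ r‖ₑ, hUm.measurable_mk.enorm, ?_, ?_⟩
  · filter_upwards [hUm.ae_eq_mk] with r hr
    rw [← hr]
    by_cases h : r ∈ U <;> simp [h]
  intro x hx
  unfold Tgen
  by_cases hi : IntervalIntegrable (fun z => Bker y x z * f (Rker x y z) / √(1 - z ^ 2))
      volume (-1) 1
  · have hm := f_aem hx hy hi
    have hd : 0 < √(1 - x ^ 2) * √(1 - y ^ 2) :=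
      mul_pos (Real.sqrt_pos.2 (one_sub_sq_pos hx)) (Real.sqrt_pos.2 (one_sub_sq_pos hy))
    have hsub : Ioo (Rker x y 1) (Rker x y (-1)) ⊆ U := by
      intro r hr
      obtain ⟨a, ha1, ha2⟩ := exists_rat_btwn hr.1
      obtain ⟨b, hb1, hb2⟩ := exists_rat_btwn hr.2
      refine mem_iUnion.2 ⟨(a, b), ⟨ha2, hb1⟩, ?_⟩
      exact hm.mono_measure (Measure.restrict_mono
        (Ioo_subset_Ioo ha1.le hb2.le) le_rfl)
    have h1 := one_sub_sq_pos hx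
    have h1y : 0 < 1 + y := by linarith [hy.1]
    rw [enorm_mul, Real.enorm_eq_ofReal (by positivity)]
    gcongr
    rw [intervalIntegral.integral_of_le (by norm_num), integral_Ioc_eq_integral_Ioo]
    refine (enorm_integral_le_lintegral_enorm _).trans ?_
    rw [← lintegral_indicator measurableSet_Ioo]
    apply lintegral_mono_ae
    filter_upwards [(qmp_R hx hy).ae hUm.ae_eq_mk] with z hz
    by_cases hz' : z ∈ Ioo (-1 : ℝ) 1
    · rw [indicator_of_mem hz', ← hz, indicator_of_mem, div_eq_mul_inv, enorm_mul, enorm_mul,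
        Real.enorm_eq_ofReal_abs, wz, Real.enorm_eq_ofReal (inv_nonneg.2 (Real.sqrt_nonneg _))]
      apply hsub
      simp only [Rker, mul_assoc]
      constructor <;> nlinarith [hz'.1, hz'.2]
    · simp [hz']
  · rw [intervalIntegral.integral_undef hi]; simp

lemma wnorm_Ioo (p : ℝ≥0∞) (α : ℝ) (f : ℝ → ℝ) :
    wnorm p α f = eLpNorm (fun x => f x * (1 - x ^ 2) ^ α) p
      (volume.restrict (Ioo (-1 : ℝ) 1)) := by
  rw [wnorm, Measure.restrict_congr_set Ioo_ae_eq_Icc]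

lemma Tgen_one (f : ℝ → ℝ) {x : ℝ} (hx : x ∈ Ioo (-1 : ℝ) 1) : ‖Tgen 1 f x‖ₑ ≤ KK 0 * ‖f x‖ₑ := by
  have h1 := one_sub_sq_pos hx
  have hR : ∀ z, Rker x 1 z = x := by intro z; simp [Rker]
  have hB : ∀ z, Bker 1 x z = 1 - x ^ 2 := by
    intro z
    simp only [Bker, hR]
    have := Real.sq_sqrt h1.le
    simp
    linarith
  unfold Tgen
  simp only [hR, hB]
  rw [enorm_mul, Real.enorm_eq_ofReal (by positivity),
    intervalIntegral.integral_of_le (by norm_num), integral_Ioc_eq_integral_Ioo]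
  have h2 : ‖∫ z in Ioo (-1 : ℝ) 1, (1 - x ^ 2) * f x / √(1 - z ^ 2)‖ₑ
      ≤ ENNReal.ofReal (1 - x ^ 2) * ‖f x‖ₑ * KK 0 := by
    refine (enorm_integral_le_lintegral_enorm _).trans ?_
    have hwm := wz_meas
    have hVm := Vw_meas (-0)
    rw [KK, ← lintegral_const_mul _ (by fun_prop)]
    refine (setLIntegral_le_lintegral _ _).trans (lintegral_mono fun z => ?_)
    simp only [neg_zero, Vw_zero, one_mul]
    rw [div_eq_mul_inv, enorm_mul, enorm_mul, wz, Real.enorm_eq_ofReal h1.le,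
      Real.enorm_eq_ofReal (inv_nonneg.2 (Real.sqrt_nonneg _))]
  refine (mul_le_mul_right h2 _).trans ?_
  have h3 : ENNReal.ofReal (4 / (π * (1 - x ^ 2) * (1 + 1) ^ 2)) * ENNReal.ofReal (1 - x ^ 2) ≤ 1 := by
    rw [← ENNReal.ofReal_mul (by positivity)]
    apply ENNReal.ofReal_le_one.2
    have : 4 / (π * (1 - x ^ 2) * (1 + 1) ^ 2) * (1 - x ^ 2) = 1 / π := by
      field_simp; norm_num
    rw [this, div_le_one Real.pi_pos]
    linarith [Real.pi_gt_three]
  calc _ = (ENNReal.ofReal (4 / (π * (1 - x ^ 2) * (1 + 1) ^ 2)) * ENNReal.ofReal (1 - x ^ 2))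
        * (KK 0 * ‖f x‖ₑ) := by ring
    _ ≤ _ := mul_le_of_le_one_left zero_le h3

theorem Tgen_bound (p : ℝ≥0∞) (α : ℝ) (hpα : ParamOK p α) :
    ∃ C > (0 : ℝ), ∀ f : ℝ → ℝ, wnorm p α f < ⊤ →
      ∀ t ∈ Set.Ioo (-Real.pi) Real.pi,
        wnorm p α (fun x => Tgen (Real.cos t) f x) ≤
          ENNReal.ofReal (C / Real.cos (t / 2) ^ 4) * wnorm p α f := by
  obtain ⟨C, hC, H⟩ := core hpα
  have hK := (KK_lt (γ := 0) le_rfl (by norm_num)).ne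
  refine ⟨80 * C.toReal + (KK 0).toReal + 1, by positivity, fun f _ t ht => ?_⟩
  have hcos : 0 < Real.cos (t / 2) :=
    Real.cos_pos_of_mem_Ioo ⟨by linarith [ht.1], by linarith [ht.2]⟩
  have hct : 1 + Real.cos t = 2 * Real.cos (t / 2) ^ 2 := by
    have := Real.cos_two_mul (t / 2)
    rw [mul_div_cancel₀ t two_ne_zero] at this
    linarith
  rw [wnorm_Ioo, wnorm_Ioo]
  have hy1 : -1 < Real.cos t := by nlinarith [pow_pos hcos 2]
  rcases (Real.cos_le_one t).eq_or_lt with h1 | h1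
  · -- the trivial translation
    have hc1 : Real.cos (t / 2) ^ 4 = 1 := by
      have : Real.cos (t / 2) ^ 2 = 1 := by linarith
      calc Real.cos (t / 2) ^ 4 = (Real.cos (t / 2) ^ 2) ^ 2 := by ring
        _ = 1 := by rw [this]; norm_num
    rw [hc1, h1]
    refine eLp_mul p ?_
    filter_upwards [ae_restrict_mem measurableSet_Ioo] with x hx
    rw [enorm_mul, enorm_mul, ← mul_assoc]
    gcongr
    refine (Tgen_one f hx).trans ?_
    gcongr
    rw [← ENNReal.ofReal_toReal hK]
    apply ENNReal.ofReal_le_ofReal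
    have : 0 ≤ C.toReal := ENNReal.toReal_nonneg
    rw [ENNReal.toReal_ofReal ENNReal.toReal_nonneg]
    linarith
  · have hy : Real.cos t ∈ Ioo (-1 : ℝ) 1 := ⟨hy1, h1⟩
    obtain ⟨g, hg, hgf, hT⟩ := prelim hy f
    have hV1 := Vw_meas 1
    set y := Real.cos t with hydef
    set c := Real.cos (t / 2) with hcdef
    have step1 : eLpNorm (fun x => Tgen y f x * (1 - x ^ 2) ^ α) p
        (volume.restrict (Ioo (-1 : ℝ) 1)) ≤ ENNReal.ofReal (80 / c ^ 4) *
          eLpNorm (NN (α - 1) y (fun r => Vw 1 r * g r)) p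
            (volume.restrict (Ioo (-1 : ℝ) 1)) := by
      refine eLp_mul p ?_
      filter_upwards [ae_restrict_mem measurableSet_Ioo] with x hx
      have hx' := one_sub_sq_pos hx
      have hRm := Rmeas x y
      have hwm := wz_meas
      have i1 : ∫⁻ z, ENNReal.ofReal |Bker y x z| * g (Rker x y z) * wz z ≤
          20 * ∫⁻ z, (Vw 1 (Rker x y z) * g (Rker x y z)) * wz z := by
        rw [← lintegral_const_mul _ (by fun_prop)]
        apply lintegral_mono
        intro z
        by_cases hz : z ∈ Ioo (-1 : ℝ) 1
        · have : ENNReal.ofReal |Bker y x z| ≤ 20 * Vw 1 (Rker x y z) := by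
            rw [Vw, Real.rpow_one, show (20 : ℝ≥0∞) = ENNReal.ofReal 20 by simp,
              ← ENNReal.ofReal_mul (by norm_num)]
            exact ENNReal.ofReal_le_ofReal (B_bound hx hy hz)
          calc ENNReal.ofReal |Bker y x z| * g (Rker x y z) * wz z
              ≤ 20 * Vw 1 (Rker x y z) * g (Rker x y z) * wz z := by gcongr
            _ = _ := by ring
        · simp [wz_zero hz]
      have i2 : ENNReal.ofReal (4 / (π * (1 - x ^ 2) * (1 + y) ^ 2)) * 20 * Vw α x
          ≤ ENNReal.ofReal (80 / c ^ 4) * Vw (α - 1) x := by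
        unfold Vw
        rw [show (20 : ℝ≥0∞) = ENNReal.ofReal 20 by simp, ← ENNReal.ofReal_mul (by positivity),
          ← ENNReal.ofReal_mul (by positivity), ← ENNReal.ofReal_mul (by positivity)]
        apply ENNReal.ofReal_le_ofReal
        rw [Real.rpow_sub_one hx'.ne', hct]
        have hP : 0 < (1 - x ^ 2) ^ α := by positivity
        have e : 4 / (π * (1 - x ^ 2) * (2 * c ^ 2) ^ 2) * 20 * (1 - x ^ 2) ^ α
            = (20 / π / c ^ 4) * ((1 - x ^ 2) ^ α / (1 - x ^ 2)) := by
          field_simp; norm_num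
        rw [e]
        gcongr
        rw [div_le_iff₀ Real.pi_pos]
        nlinarith [Real.pi_gt_three]
      calc ‖Tgen y f x * (1 - x ^ 2) ^ α‖ₑ = ‖Tgen y f x‖ₑ * Vw α x := by
            rw [enorm_mul, Vw, Real.enorm_eq_ofReal (r := (1 - x ^ 2) ^ α) (by positivity)]
        _ ≤ (ENNReal.ofReal (4 / (π * (1 - x ^ 2) * (1 + y) ^ 2)) *
            (20 * ∫⁻ z, (Vw 1 (Rker x y z) * g (Rker x y z)) * wz z)) * Vw α x := by
            gcongr
            exact (hT x hx).trans (by gcongr)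
        _ = (ENNReal.ofReal (4 / (π * (1 - x ^ 2) * (1 + y) ^ 2)) * 20 * Vw α x) *
            ∫⁻ z, (Vw 1 (Rker x y z) * g (Rker x y z)) * wz z := by ring
        _ ≤ (ENNReal.ofReal (80 / c ^ 4) * Vw (α - 1) x) *
            ∫⁻ z, (Vw 1 (Rker x y z) * g (Rker x y z)) * wz z := by gcongr
        _ = _ := by rw [enorm_eq_self, NN, mul_assoc]
    have step2 := H y hy (fun r => Vw 1 r * g r) (by fun_prop)
    have step3 : eLpNorm (fun x => Vw 1 x * g x * Vw (α - 1) x) p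
        (volume.restrict (Ioo (-1 : ℝ) 1)) ≤ eLpNorm (fun x => f x * (1 - x ^ 2) ^ α) p
        (volume.restrict (Ioo (-1 : ℝ) 1)) := by
      apply eLpNorm_mono_enorm_ae
      filter_upwards [ae_restrict_mem measurableSet_Ioo, ae_restrict_of_ae hgf] with x hx hgx
      have hx' := one_sub_sq_pos hx
      rw [enorm_eq_self, enorm_mul, Real.enorm_eq_ofReal (r := (1 - x ^ 2) ^ α) (by positivity),
        mul_right_comm, Vw_mul hx, mul_comm, add_sub_cancel, Vw]
      gcongr
    calc _ ≤ ENNReal.ofReal (80 / c ^ 4) * (C * eLpNorm (fun x => f x * (1 - x ^ 2) ^ α) p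
          (volume.restrict (Ioo (-1 : ℝ) 1))) := by
          refine step1.trans ?_
          gcongr
          exact step2.trans (by gcongr)
      _ = ENNReal.ofReal (80 / c ^ 4 * C.toReal) * eLpNorm (fun x => f x * (1 - x ^ 2) ^ α) p
          (volume.restrict (Ioo (-1 : ℝ) 1)) := by
          rw [ENNReal.ofReal_mul (by positivity), ENNReal.ofReal_toReal hC, mul_assoc]
      _ ≤ _ := by
          gcongr
          rw [div_mul_eq_mul_div]
          gcongr
          have : 0 ≤ (KK 0).toReal := ENNReal.toReal_nonneg
          linarith
end
end

section
/- Let 1 ≤ p ≤ ∞, α > −1/p (α ≥ 0 for p = ∞), and ρ ≥ 0. There exist constants C₁, C₂ independent of n such that for every algebraic polynomial P_n of degree at most n−1: ‖P_n'(x)(1−x²)^{α+1/2}‖_p ≤ C₁ n ‖P_n(x)(1−x²)^α‖_p and ‖P_n(x)(1−x²)^α‖_p ≤ C₂ n^{2ρ} ‖P_n(x)(1−x²)^{α+ρ}‖_p. -/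
open MeasureTheory Real Set
open scoped ENNReal

noncomputable section

namespace BM


def ee (j : ℤ) (θ : ℝ) : ℂ := Complex.exp ((j : ℂ) * (θ : ℂ) * Complex.I)

lemma ee_add_left (j l : ℤ) (θ : ℝ) : ee (j + l) θ = ee j θ * ee l θ := by
  unfold ee; rw [← Complex.exp_add]; congr 1; push_cast; ring

lemma ee_add_right (j : ℤ) (θ φ : ℝ) : ee j (θ + φ) = ee j θ * ee j φ := by
  unfold ee; rw [← Complex.exp_add]; congr 1; push_cast; ring

lemma norm_ee (j : ℤ) (θ : ℝ) : ‖ee j θ‖ = 1 := by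
  unfold ee
  have : ((j : ℂ) * (θ : ℂ) * Complex.I) = ((j * θ : ℝ) : ℂ) * Complex.I := by push_cast; ring
  rw [this, Complex.norm_exp_ofReal_mul_I]

lemma ee_zero (θ : ℝ) : ee 0 θ = 1 := by simp [ee]
lemma ee_zero_right (j : ℤ) : ee j 0 = 1 := by simp [ee]

lemma ee_per (j : ℤ) (θ : ℝ) : ee j (θ + 2 * π) = ee j θ := by
  rw [ee_add_right]
  have : ee j (2 * π) = 1 := by
    unfold ee
    rw [Complex.exp_eq_one_iff]
    exact ⟨j, by push_cast; ring⟩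
  rw [this, mul_one]

lemma hasDerivAt_ee (j : ℤ) (θ : ℝ) :
    HasDerivAt (ee j) ((j : ℂ) * Complex.I * ee j θ) θ := by
  have h : HasDerivAt (fun z : ℂ => Complex.exp ((j : ℂ) * z * Complex.I))
      (Complex.exp ((j : ℂ) * (θ : ℂ) * Complex.I) * ((j : ℂ) * 1 * Complex.I)) (θ : ℂ) :=
    (((hasDerivAt_id (θ : ℂ)).const_mul (j : ℂ)).mul_const Complex.I).cexp
  refine h.comp_ofReal.congr_deriv ?_
  unfold ee; ring

/-- discrete orthogonality -/
lemma orth (M : ℕ) (hM : 0 < M) (d : ℤ) (hd : |d| < M) :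
    ∑ k ∈ Finset.range M, ee d (2 * π * k / M) = if d = 0 then (M : ℂ) else 0 := by
  have hMr : (M : ℝ) ≠ 0 := by positivity
  have hMc : (M : ℂ) ≠ 0 := by exact_mod_cast hM.ne'
  have hpow : ∀ k : ℕ, ee d (2 * π * k / M) = (ee d (2 * π / M)) ^ k := by
    intro k
    unfold ee
    rw [← Complex.exp_nat_mul]; congr 1; push_cast; ring
  simp_rw [hpow]
  split_ifs with h0
  · subst h0; simp [ee_zero]
  · have h1 : ee d (2 * π / M) ≠ 1 := by
      intro h
      unfold ee at h
      rw [Complex.exp_eq_one_iff] at h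
      obtain ⟨n, hn⟩ := h
      have hpi : (2 * (π : ℂ) * Complex.I) ≠ 0 := Complex.two_pi_I_ne_zero
      have : (d : ℂ) = n * M := by
        have h2 : (d : ℂ) / M * (2 * (π : ℂ) * Complex.I) = n * (2 * (π : ℂ) * Complex.I) := by
          rw [← hn]; push_cast; ring
        have h3 := mul_right_cancel₀ hpi h2
        field_simp at h3
        linear_combination h3
      have h4 : d = n * M := by exact_mod_cast this
      rw [h4, abs_mul, Nat.abs_cast] at hd
      have : n ≠ 0 := by rintro rfl; simp at h4; exact h0 h4
      have := Int.one_le_abs this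
      nlinarith
    rw [geom_sum_eq h1, ← hpow]
    have : ee d (2 * π * M / M) = 1 := by
      rw [mul_div_assoc, div_self hMr, mul_one, ← zero_add (2 * π), ee_per, ee_zero_right]
    rw [this]; simp

lemma count_aux (N : ℕ) (j : ℤ) (hj : |j| ≤ N) :
    ∑ a ∈ Finset.range N, ∑ b ∈ Finset.range N,
      ((if j - ((a : ℤ) - b + N) = 0 then (1 : ℂ) else 0)
        - (if j - ((a : ℤ) - b - N) = 0 then (1 : ℂ) else 0)) = j := by
  rw [abs_le] at hj
  rcases le_total 0 j with h | h
  · obtain ⟨i, rfl⟩ := Int.eq_ofNat_of_zero_le h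
    rw [Finset.sum_comm]
    have key : ∀ b ∈ Finset.range N, ∑ a ∈ Finset.range N,
      ((if (i : ℤ) - ((a : ℤ) - b + N) = 0 then (1 : ℂ) else 0)
        - (if (i : ℤ) - ((a : ℤ) - b - N) = 0 then (1 : ℂ) else 0)) =
        if N ≤ b + i then 1 else 0 := by
      intro b hb
      rw [Finset.mem_range] at hb
      split_ifs with h2
      · rw [Finset.sum_eq_single (b + i - N)]
        · rw [if_pos (by omega), if_neg (by omega)]; simp
        · intro a ha hne
          rw [Finset.mem_range] at ha
          rw [if_neg (by omega), if_neg (by omega)]; simp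
        · intro h3; simp at h3; omega
      · apply Finset.sum_eq_zero
        intro a ha
        rw [Finset.mem_range] at ha
        rw [if_neg (by omega), if_neg (by omega)]; simp
    rw [Finset.sum_congr rfl key, Finset.sum_boole]
    have : (Finset.range N).filter (fun b => N ≤ b + i) = Finset.Ico (N - i) N := by
      ext b; simp; omega
    rw [this, Nat.card_Ico]
    have : N - (N - i) = i := by omega
    rw [this]; simp
  · obtain ⟨i, hi⟩ := Int.eq_ofNat_of_zero_le (a := -j) (by omega)
    have hji : j = -(i : ℤ) := by omega
    subst hji
    have key : ∀ a ∈ Finset.range N, ∑ b ∈ Finset.range N,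
      ((if -(i : ℤ) - ((a : ℤ) - b + N) = 0 then (1 : ℂ) else 0)
        - (if -(i : ℤ) - ((a : ℤ) - b - N) = 0 then (1 : ℂ) else 0)) =
        if N ≤ a + i then -1 else 0 := by
      intro a hb
      rw [Finset.mem_range] at hb
      split_ifs with h2
      · rw [Finset.sum_eq_single (a + i - N)]
        · rw [if_neg (by omega), if_pos (by omega)]; simp
        · intro a ha hne
          rw [Finset.mem_range] at ha
          rw [if_neg (by omega), if_neg (by omega)]; simp
        · intro h3; simp at h3; omega
      · apply Finset.sum_eq_zero
        intro a ha
        rw [Finset.mem_range] at ha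
        rw [if_neg (by omega), if_neg (by omega)]; simp
    rw [Finset.sum_congr rfl key, ← Finset.sum_filter]
    have : (Finset.range N).filter (fun b => N ≤ b + i) = Finset.Ico (N - i) N := by
      ext b; simp; omega
    rw [this, Finset.sum_const, Nat.card_Ico]
    have : N - (N - i) = i := by omega
    rw [this]; simp

def AA (N : ℕ) (t : ℝ) : ℂ := ∑ a ∈ Finset.range N, ee a t

lemma conj_ee (j : ℤ) (t : ℝ) : (starRingEnd ℂ) (ee j t) = ee (-j) t := by
  unfold ee
  rw [← Complex.exp_conj]; congr 1; simp

lemma normsq_AA (N : ℕ) (t : ℝ) :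
    ((‖AA N t‖ ^ 2 : ℝ) : ℂ) =
      ∑ a ∈ Finset.range N, ∑ b ∈ Finset.range N, ee ((a : ℤ) - b) t := by
  have := Complex.mul_conj' (AA N t)
  push_cast
  rw [← this]
  unfold AA
  rw [map_sum, Finset.sum_mul_sum]
  refine Finset.sum_congr rfl fun a _ => Finset.sum_congr rfl fun b _ => ?_
  rw [conj_ee, sub_eq_add_neg, ee_add_left]

lemma sum_node (M : ℕ) (hM : 0 < M) (j l : ℤ) (h : |j - l| < M) (φ θ : ℝ) :
    ∑ k ∈ Finset.range M, ee l (φ - θ - 2 * π * k / M) * ee j (θ + 2 * π * k / M)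
      = M * (if j - l = 0 then 1 else 0) * ee j φ := by
  have h1 : ∀ k ∈ Finset.range M,
      ee l (φ - θ - 2 * π * k / M) * ee j (θ + 2 * π * k / M) =
      (ee l (φ - θ) * ee j θ) * ee (j - l) (2 * π * k / M) := by
    intro k _
    unfold ee; simp only [← Complex.exp_add]; congr 1; push_cast; ring
  rw [Finset.sum_congr rfl h1, ← Finset.mul_sum, orth M hM _ h]
  split_ifs with h0
  · have : l = j := by omega
    subst this
    rw [← ee_add_right]; simp [mul_comm]
  · simp

/-- Parseval for the Fejer kernel at the nodes -/
lemma sum_AA (N : ℕ) (hN : 0 < N) (u : ℝ) :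
    ∑ k ∈ Finset.range (4 * N), ‖AA N (u - 2 * π * k / (4 * N : ℕ))‖ ^ 2 = 4 * N * N := by
  have : ((∑ k ∈ Finset.range (4 * N), ‖AA N (u - 2 * π * k / (4 * N : ℕ))‖ ^ 2 : ℝ) : ℂ)
      = ((4 * N * N : ℝ) : ℂ) := by
    rw [Complex.ofReal_sum]
    simp_rw [normsq_AA]
    rw [Finset.sum_comm]
    have h : ∀ a ∈ Finset.range N, ∑ k ∈ Finset.range (4 * N), ∑ b ∈ Finset.range N,
        ee ((a : ℤ) - b) (u - 2 * π * k / (4 * N : ℕ)) = 4 * N := by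
      intro a ha
      rw [Finset.sum_comm, Finset.sum_eq_single a]
      · simp [ee_zero]
      · intro b hb hne
        rw [Finset.mem_range] at ha hb
        have := sum_node (4 * N) (by omega) 0 ((a : ℤ) - b)
          (by rw [abs_lt]; push_cast; constructor <;> omega) u 0
        simp only [ee_zero, mul_one, sub_zero] at this
        rw [this, if_neg (by omega)]; simp
      · intro h; exact absurd ha h
    rw [Finset.sum_congr rfl h]; simp; ring
  exact_mod_cast this

lemma repr_ee (N : ℕ) (hN : 0 < N) (j : ℤ) (hj : |j| ≤ N) (φ θ : ℝ) :
    (j : ℂ) * Complex.I * ee j φ = (1 / (4 * N : ℂ)) * ∑ k ∈ Finset.range (4 * N),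
      ((-2 * Real.sin (N * (φ - θ - 2 * π * k / (4 * N : ℕ)))
        * ‖AA N (φ - θ - 2 * π * k / (4 * N : ℕ))‖ ^ 2 : ℝ) : ℂ)
        * ee j (θ + 2 * π * k / (4 * N : ℕ)) := by
  have hs : ∀ t : ℝ, ((-2 * Real.sin (N * t) * ‖AA N t‖ ^ 2 : ℝ) : ℂ) =
      Complex.I * ∑ a ∈ Finset.range N, ∑ b ∈ Finset.range N,
        (ee ((a : ℤ) - b + N) t - ee ((a : ℤ) - b - N) t) := by
    intro t
    have h1 : ((-2 * Real.sin (N * t) : ℝ) : ℂ) = Complex.I * (ee N t - ee (-N) t) := by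
      unfold ee
      push_cast
      rw [Complex.sin]
      have : Complex.I * Complex.I = -1 := Complex.I_mul_I
      have e1 : -((N : ℂ) * t) * Complex.I = -(N : ℂ) * t * Complex.I := by ring
      rw [e1]
      ring
    rw [Complex.ofReal_mul, normsq_AA, h1, mul_assoc, Finset.mul_sum]
    congr 1
    refine Finset.sum_congr rfl fun a _ => ?_
    rw [Finset.mul_sum]
    refine Finset.sum_congr rfl fun b _ => ?_
    rw [ee_add_left, sub_eq_add_neg ((a : ℤ) - b) (N : ℤ), ee_add_left _ (-(N : ℤ))]
    ring
  simp_rw [hs]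
  have hNc : (N : ℂ) ≠ 0 := by exact_mod_cast hN.ne'
  have : ∑ k ∈ Finset.range (4 * N), (Complex.I * ∑ a ∈ Finset.range N, ∑ b ∈ Finset.range N,
        (ee ((a : ℤ) - b + N) (φ - θ - 2 * π * k / (4 * N : ℕ))
          - ee ((a : ℤ) - b - N) (φ - θ - 2 * π * k / (4 * N : ℕ))))
        * ee j (θ + 2 * π * k / (4 * N : ℕ)) =
      Complex.I * (4 * N) * ee j φ * ∑ a ∈ Finset.range N, ∑ b ∈ Finset.range N,
      ((if j - ((a : ℤ) - b + N) = 0 then (1 : ℂ) else 0)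
        - (if j - ((a : ℤ) - b - N) = 0 then (1 : ℂ) else 0)) := by
    simp_rw [mul_assoc Complex.I, ← Finset.mul_sum, Finset.sum_mul, Finset.mul_sum]
    rw [Finset.sum_comm]
    refine Finset.sum_congr rfl fun a ha => ?_
    rw [Finset.sum_comm]
    refine Finset.sum_congr rfl fun b hb => ?_
    rw [Finset.mem_range] at ha hb
    rw [abs_le] at hj
    rw [← Finset.mul_sum]
    simp_rw [sub_mul]
    rw [Finset.sum_sub_distrib,
      sum_node (4 * N) (by omega) j _ (by rw [abs_lt]; push_cast; constructor <;> omega),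
      sum_node (4 * N) (by omega) j _ (by rw [abs_lt]; push_cast; constructor <;> omega)]
    push_cast; ring
  rw [this, count_aux N j hj]
  field_simp

/-- trigonometric polynomials of degree at most `N` -/
def TP (N : ℕ) : Submodule ℂ (ℝ → ℂ) := Submodule.span ℂ (ee '' {j : ℤ | |j| ≤ N})

lemma ee_mem (N : ℕ) (j : ℤ) (hj : |j| ≤ N) : ee j ∈ TP N :=
  Submodule.subset_span ⟨j, hj, rfl⟩

lemma TP_mul {N K : ℕ} {f g : ℝ → ℂ} (hf : f ∈ TP N) (hg : g ∈ TP K) : f * g ∈ TP (N + K) := by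
  have : f * g ∈ TP N * TP K := Submodule.mul_mem_mul hf hg
  unfold TP at this
  rw [Submodule.span_mul_span] at this
  refine Submodule.span_le.2 ?_ this
  rintro _ ⟨_, ⟨j, hj, rfl⟩, _, ⟨l, hl, rfl⟩, rfl⟩
  have : (fun x1 x2 : ℝ → ℂ => x1 * x2) (ee j) (ee l) = ee (j + l) := by
    funext θ; simp [ee_add_left]
  rw [this]
  apply ee_mem
  simp only [Set.mem_ofPred_eq] at hj hl
  push_cast
  exact (abs_add_le _ _).trans (add_le_add hj hl)

lemma TP_mono {N K : ℕ} (h : N ≤ K) : TP N ≤ TP K := by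
  apply Submodule.span_mono
  apply Set.image_mono
  intro j hj
  simp only [Set.mem_ofPred_eq] at hj ⊢
  exact hj.trans (by exact_mod_cast h)

lemma TP_one : (1 : ℝ → ℂ) ∈ TP 0 := by
  have : (1 : ℝ → ℂ) = ee 0 := by funext θ; simp [ee_zero]
  rw [this]; exact ee_mem _ _ (by simp)

lemma TP_pow {N : ℕ} {f : ℝ → ℂ} (hf : f ∈ TP N) (m : ℕ) : f ^ m ∈ TP (m * N) := by
  induction m with
  | zero => simpa using TP_one
  | succ m ih =>
    rw [pow_succ, Nat.succ_mul]
    exact TP_mul ih hf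

lemma TP_shift {N : ℕ} {f : ℝ → ℂ} (hf : f ∈ TP N) (c : ℝ) : (fun θ => f (θ + c)) ∈ TP N := by
  induction hf using Submodule.span_induction with
  | mem x hx =>
    obtain ⟨j, hj, rfl⟩ := hx
    have : (fun θ => ee j (θ + c)) = ee j c • ee j := by
      funext θ; simp [ee_add_right, mul_comm]
    rw [this]
    exact Submodule.smul_mem _ _ (ee_mem _ _ hj)
  | zero => exact Submodule.zero_mem _
  | add x y _ _ hx hy => exact Submodule.add_mem _ hx hy
  | smul a x _ hx => exact Submodule.smul_mem _ a hx

lemma TP_per {N : ℕ} {f : ℝ → ℂ} (hf : f ∈ TP N) : Function.Periodic f (2 * π) := by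
  induction hf using Submodule.span_induction with
  | mem x hx =>
    obtain ⟨j, hj, rfl⟩ := hx
    exact ee_per j
  | zero => intro x; rfl
  | add x y _ _ hx hy => exact hx.add hy
  | smul a x _ hx => exact hx.smul a

lemma TP_deriv {N : ℕ} {f : ℝ → ℂ} (hf : f ∈ TP N) : Differentiable ℝ f ∧ deriv f ∈ TP N := by
  induction hf using Submodule.span_induction with
  | mem x hx =>
    obtain ⟨j, hj, rfl⟩ := hx
    refine ⟨fun θ => (hasDerivAt_ee j θ).differentiableAt, ?_⟩
    have : deriv (ee j) = ((j : ℂ) * Complex.I) • ee j := by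
      funext θ; simp [(hasDerivAt_ee j θ).deriv]
    rw [this]
    exact Submodule.smul_mem _ _ (ee_mem _ _ hj)
  | zero =>
    refine ⟨differentiable_const (0:ℂ), ?_⟩
    have : deriv (0 : ℝ → ℂ) = 0 := by funext θ; simp
    rw [this]; exact Submodule.zero_mem _
  | add x y _ _ hx hy =>
    refine ⟨hx.1.add hy.1, ?_⟩
    have : deriv (x + y) = deriv x + deriv y := by
      funext θ; exact deriv_add (hx.1 θ) (hy.1 θ)
    rw [this]; exact Submodule.add_mem _ hx.2 hy.2
  | smul a x _ hx =>
    refine ⟨hx.1.const_smul a, ?_⟩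
    have : deriv (a • x) = a • deriv x := by
      funext θ; exact deriv_const_smul a (hx.1 θ)
    rw [this]; exact Submodule.smul_mem _ a hx.2

lemma repr_TP (N : ℕ) (hN : 0 < N) {f : ℝ → ℂ} (hf : f ∈ TP N) (φ θ : ℝ) :
    deriv f φ = (1 / (4 * N : ℂ)) * ∑ k ∈ Finset.range (4 * N),
      ((-2 * Real.sin (N * (φ - θ - 2 * π * k / (4 * N : ℕ)))
        * ‖AA N (φ - θ - 2 * π * k / (4 * N : ℕ))‖ ^ 2 : ℝ) : ℂ)
        * f (θ + 2 * π * k / (4 * N : ℕ)) := by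
  induction hf using Submodule.span_induction with
  | mem x hx =>
    obtain ⟨j, hj, rfl⟩ := hx
    rw [(hasDerivAt_ee j φ).deriv]
    exact repr_ee N hN j hj φ θ
  | zero =>
    have : deriv (0 : ℝ → ℂ) = 0 := by funext θ; simp
    rw [this]; simp
  | add x y hx' hy' hx hy =>
    have : deriv (x + y) φ = deriv x φ + deriv y φ :=
      deriv_add ((TP_deriv hx').1 φ) ((TP_deriv hy').1 φ)
    rw [this, hx, hy, ← mul_add, ← Finset.sum_add_distrib]
    simp only [Pi.add_apply, mul_add]
  | smul a x hx' hx =>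
    have : deriv (a • x) φ = a • deriv x φ := deriv_const_smul a ((TP_deriv hx').1 φ)
    rw [this, hx, smul_eq_mul, mul_left_comm, Finset.mul_sum]
    congr 1
    refine Finset.sum_congr rfl fun k _ => ?_
    simp only [Pi.smul_apply, smul_eq_mul]; ring

lemma repr_bound (N : ℕ) (hN : 0 < N) {f : ℝ → ℂ} (hf : f ∈ TP N) (φ θ : ℝ) :
    ‖deriv f φ‖ ≤ ∑ k ∈ Finset.range (4 * N),
      (1 / (2 * N) * ‖AA N (φ - θ - 2 * π * k / (4 * N : ℕ))‖ ^ 2)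
        * ‖f (θ + 2 * π * k / (4 * N : ℕ))‖ := by
  rw [repr_TP N hN hf φ θ, norm_mul]
  have hN' : (0:ℝ) < N := by exact_mod_cast hN
  have h1 : ‖(1 / (4 * N : ℂ))‖ = 1 / (4 * N) := by simp
  rw [h1]
  refine (mul_le_mul_of_nonneg_left (norm_sum_le _ _) (by positivity)).trans ?_
  rw [Finset.mul_sum]
  refine Finset.sum_le_sum fun k _ => ?_
  rw [norm_mul, Complex.norm_real, norm_mul, norm_mul, Real.norm_eq_abs, Real.norm_eq_abs,
    Real.norm_eq_abs, abs_of_nonneg (sq_nonneg ‖AA N _‖)]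
  set s := |Real.sin (N * (φ - θ - 2 * π * k / (4 * N : ℕ)))| with hs
  have hs1 : s ≤ 1 := Real.abs_sin_le_one _
  set A := ‖AA N (φ - θ - 2 * π * k / (4 * N : ℕ))‖ ^ 2
  set F := ‖f (θ + 2 * π * k / (4 * N : ℕ))‖
  have hAF : 0 ≤ A * F := by positivity
  have : |(-2:ℝ)| = 2 := by norm_num
  rw [this]
  calc 1 / (4 * (N:ℝ)) * (2 * s * A * F) = s * (1 / (2 * N) * (A * F)) := by field_simp; ring
    _ ≤ 1 * (1 / (2 * N) * (A * F)) := by gcongr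
    _ = _ := by ring


lemma TP_cont {N : ℕ} {f : ℝ → ℂ} (hf : f ∈ TP N) : Continuous f := (TP_deriv hf).1.continuous

lemma AA_mem (n : ℕ) : AA n ∈ TP n := by
  have : AA n = ∑ a ∈ Finset.range n, ee a := by
    funext t; simp [AA]
  rw [this]
  refine Submodule.sum_mem _ fun a ha => ee_mem _ _ ?_
  rw [Finset.mem_range] at ha
  rw [Nat.abs_cast]; exact_mod_cast ha.le

def DD (n : ℕ) : ℝ → ℂ := (1 / (n : ℂ)) • AA n

lemma DD_mem (n : ℕ) : DD n ∈ TP n := Submodule.smul_mem _ _ (AA_mem n)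

lemma DD_zero (n : ℕ) (hn : 0 < n) : DD n 0 = 1 := by
  have : (n : ℂ) ≠ 0 := by exact_mod_cast hn.ne'
  simp [DD, AA, ee_zero_right, this]

lemma norm_AA_le (n : ℕ) (t : ℝ) : ‖AA n t‖ ≤ n := by
  unfold AA
  refine (norm_sum_le _ _).trans ?_
  simp [norm_ee]

lemma norm_DD (n : ℕ) (t : ℝ) : ‖DD n t‖ = ‖AA n t‖ / n := by
  simp [DD]; ring

lemma norm_DD_le (n : ℕ) (t : ℝ) : ‖DD n t‖ ≤ 1 := by
  rw [norm_DD]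
  exact div_le_one_of_le₀ (norm_AA_le n t) (by positivity)

lemma AA_sin (n : ℕ) (t : ℝ) : ‖AA n t‖ * |sin t| ≤ 2 := by
  have h1 : AA n t * (1 - ee 1 t) = 1 - ee n t := by
    have hp : ∀ k : ℕ, ee k t = (ee 1 t) ^ k := by
      intro k; unfold ee; rw [← Complex.exp_nat_mul]; congr 1; push_cast; ring
    unfold AA
    simp_rw [hp]
    have := geom_sum_mul (ee 1 t) n
    linear_combination -this
  have h2 : |sin t| ≤ ‖1 - ee 1 t‖ := by
    have := Complex.abs_im_le_norm (1 - ee 1 t)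
    have h3 : (1 - ee 1 t).im = - sin t := by
      unfold ee
      simp [Complex.exp_ofReal_mul_I_im]
    rwa [h3, abs_neg] at this
  calc ‖AA n t‖ * |sin t| ≤ ‖AA n t‖ * ‖1 - ee 1 t‖ := by gcongr
    _ = ‖1 - ee n t‖ := by rw [← norm_mul, h1]
    _ ≤ ‖(1:ℂ)‖ + ‖ee n t‖ := norm_sub_le _ _
    _ = 2 := by rw [norm_ee]; norm_num

lemma DD_decay (n : ℕ) (hn : 0 < n) (t : ℝ) : ‖DD n t‖ * (1 + n * |sin t|) ≤ 3 := by
  have h1 := norm_DD_le n t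
  have h2 := AA_sin n t
  have hn' : (0:ℝ) < n := by exact_mod_cast hn
  have h3 : ‖DD n t‖ * (n * |sin t|) = ‖AA n t‖ * |sin t| := by
    rw [norm_DD]; field_simp
  rw [mul_add, h3]; linarith

lemma DD_deriv_zero (n : ℕ) (hn : 0 < n) : ‖deriv (DD n) 0‖ ≤ n := by
  have hn' : (0:ℝ) < n := by exact_mod_cast hn
  have h : HasDerivAt (AA n) (∑ a ∈ Finset.range n, ((a : ℤ) : ℂ) * Complex.I * ee a 0) 0 := by
    have := HasDerivAt.sum (u := Finset.range n) (A := fun a : ℕ => ee (a : ℤ))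
      (fun a _ => hasDerivAt_ee a 0)
    have e : AA n = ∑ a ∈ Finset.range n, ee a := by
      funext t; simp [AA]
    rw [e]; exact this
  have h2 := (h.const_smul (1 / (n : ℂ))).deriv
  have h3 : deriv (DD n) 0 = _ := h2
  rw [h3, norm_smul]
  have : ‖∑ a ∈ Finset.range n, ((a : ℤ) : ℂ) * Complex.I * ee a 0‖ ≤ n * n := by
    refine (norm_sum_le _ _).trans ?_
    calc _ ≤ ∑ a ∈ Finset.range n, (n : ℝ) := by
          refine Finset.sum_le_sum fun a ha => ?_
          rw [Finset.mem_range] at ha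
          simp [norm_ee]; exact_mod_cast ha.le
      _ = n * n := by simp
  have h5 : ‖(1 / (n : ℂ))‖ = 1 / n := by simp
  rw [h5]
  calc 1 / (n:ℝ) * _ ≤ 1 / n * (n * n) := by gcongr
    _ = n := by field_simp

/-- regularised weight -/
def ww (n : ℕ) (β θ : ℝ) : ℝ := (|sin θ| + 1 / n) ^ β

lemma ww_base_pos {n : ℕ} (hn : 0 < n) (θ : ℝ) : 0 < |sin θ| + 1 / (n : ℝ) := by
  have : (0:ℝ) < n := by exact_mod_cast hn
  positivity

lemma ww_pos {n : ℕ} (hn : 0 < n) (β θ : ℝ) : 0 < ww n β θ :=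
  Real.rpow_pos_of_pos (ww_base_pos hn θ) _

lemma ww_cont {n : ℕ} (hn : 0 < n) (β : ℝ) : Continuous (ww n β) := by
  unfold ww
  refine Continuous.rpow_const (by fun_prop) fun θ => Or.inl (ww_base_pos hn θ).ne'

lemma ww_per (n : ℕ) (β : ℝ) : Function.Periodic (ww n β) (2 * π) := by
  intro θ; simp [ww]

lemma sin_sub_bound (θ t : ℝ) : |sin θ| ≤ |sin (θ + t)| + |sin t| := by
  have h : sin θ = sin (θ + t) * cos t - cos (θ + t) * sin t := by
    rw [← sin_sub]; ring_nf
  rw [h]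
  refine (abs_sub _ _).trans ?_
  rw [abs_mul, abs_mul]
  have h1 := abs_cos_le_one t
  have h2 := abs_cos_le_one (θ + t)
  have h3 := abs_nonneg (sin (θ + t))
  have h4 := abs_nonneg (sin t)
  nlinarith

lemma ww_base_shift {n : ℕ} (hn : 0 < n) (θ t : ℝ) :
    |sin θ| + 1 / (n : ℝ) ≤ (|sin (θ + t)| + 1 / n) * (1 + n * |sin t|) := by
  have hn' : (0:ℝ) < n := by exact_mod_cast hn
  have h := sin_sub_bound θ t
  have h3 := abs_nonneg (sin (θ + t))
  have h4 := abs_nonneg (sin t)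
  have : (|sin (θ + t)| + 1 / (n:ℝ)) * (1 + n * |sin t|) =
    |sin (θ + t)| + |sin t| + 1 / n + n * (|sin (θ + t)| * |sin t|) := by
    field_simp; ring
  rw [this]
  have : 0 ≤ n * (|sin (θ + t)| * |sin t|) := by positivity
  linarith

lemma ww_shift {n : ℕ} (hn : 0 < n) (β θ t : ℝ) :
    ww n β θ ≤ ww n β (θ + t) * (1 + n * |sin t|) ^ |β| := by
  have hx := ww_base_pos hn θ
  have hy := ww_base_pos hn (θ + t)
  have hz : (1:ℝ) ≤ 1 + n * |sin t| := by
    have : 0 ≤ n * |sin t| := by positivity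
    linarith
  have hz0 : (0:ℝ) < 1 + n * |sin t| := by linarith
  have h1 := ww_base_shift hn θ t
  have h2 := ww_base_shift hn (θ + t) (-t)
  rw [sin_neg, abs_neg, add_neg_cancel_right] at h2
  unfold ww
  rcases le_total 0 β with h | h
  · rw [abs_of_nonneg h, ← Real.mul_rpow hy.le hz0.le]
    exact Real.rpow_le_rpow hx.le h1 h
  · rw [abs_of_nonpos h]
    have : (|sin (θ + t)| + 1 / (n:ℝ)) ^ β ≥ ((|sin θ| + 1 / (n:ℝ)) * (1 + n * |sin t|)) ^ β :=
      Real.rpow_le_rpow_of_nonpos hy h2 h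
    rw [Real.mul_rpow hx.le hz0.le] at this
    calc (|sin θ| + 1 / (n:ℝ)) ^ β
        = ((|sin θ| + 1 / (n:ℝ)) ^ β * (1 + n * |sin t|) ^ β) * (1 + n * |sin t|) ^ (-β) := by
          rw [mul_assoc, ← Real.rpow_add hz0]; simp
      _ ≤ _ := by gcongr

lemma ww_DD {n m : ℕ} (hn : 0 < n) (β θ t : ℝ) (hm : |β| ≤ m) :
    ww n β θ * ‖DD n t‖ ^ m ≤ 3 ^ m * ww n β (θ + t) := by
  have hz : (1:ℝ) ≤ 1 + n * |sin t| := by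
    have : 0 ≤ n * |sin t| := by positivity
    linarith
  have h0 := (ww_pos hn β (θ + t)).le
  calc ww n β θ * ‖DD n t‖ ^ m
      ≤ (ww n β (θ + t) * (1 + n * |sin t|) ^ |β|) * ‖DD n t‖ ^ m := by
        gcongr; exact ww_shift hn β θ t
    _ ≤ (ww n β (θ + t) * (1 + n * |sin t|) ^ (m : ℝ)) * ‖DD n t‖ ^ m := by
        gcongr
    _ = ww n β (θ + t) * (‖DD n t‖ * (1 + n * |sin t|)) ^ m := by
        rw [Real.rpow_natCast, mul_pow]; ring
    _ ≤ ww n β (θ + t) * 3 ^ m := by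
        gcongr; exact DD_decay n hn t
    _ = _ := by ring

def nd (N k : ℕ) : ℝ := 2 * π * k / (4 * N : ℕ)

def loc (n m : ℕ) (T : ℝ → ℂ) (θ : ℝ) : ℝ → ℂ := T * (fun φ => DD n (φ + -θ)) ^ m

lemma loc_mem {n m : ℕ} {T : ℝ → ℂ} (hT : T ∈ TP n) (θ : ℝ) : loc n m T θ ∈ TP ((m + 1) * n) := by
  have := TP_mul hT (TP_pow (TP_shift (DD_mem n) (-θ)) m)
  have e : (m + 1) * n = n + m * n := by ring
  rw [e]; exact this

lemma loc_apply (n m : ℕ) (T : ℝ → ℂ) (θ t : ℝ) :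
    loc n m T θ (θ + t) = T (θ + t) * DD n t ^ m := by
  simp [loc]

lemma ww_loc {n m : ℕ} (hn : 0 < n) (T : ℝ → ℂ) (β θ t : ℝ) (hm : |β| ≤ m) :
    ww n β θ * ‖loc n m T θ (θ + t)‖ ≤ 3 ^ m * (ww n β (θ + t) * ‖T (θ + t)‖) := by
  rw [loc_apply, norm_mul, norm_pow]
  have := ww_DD hn β θ t hm
  calc _ = (ww n β θ * ‖DD n t‖ ^ m) * ‖T (θ + t)‖ := by ring
    _ ≤ (3 ^ m * ww n β (θ + t)) * ‖T (θ + t)‖ := by gcongr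
    _ = _ := by ring

lemma P1 (n m : ℕ) (hn : 0 < n) (β : ℝ) (hm : |β| ≤ m) :
    ∃ c : ℕ → ℝ, (∀ k, 0 ≤ c k) ∧
      ∑ k ∈ Finset.range (4 * ((m + 1) * n)), c k = 2 * ((m + 1) * n) * 3 ^ m ∧
      ∀ T ∈ TP n, ∀ θ, ww n β θ * ‖deriv T θ‖ ≤ m * n * (ww n β θ * ‖T θ‖) +
        ∑ k ∈ Finset.range (4 * ((m + 1) * n)),
          c k * (ww n β (θ + nd ((m + 1) * n) k) * ‖T (θ + nd ((m + 1) * n) k)‖) := by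
  set N := (m + 1) * n with hNdef
  have hN : 0 < N := by positivity
  have hN' : (0:ℝ) < N := by exact_mod_cast hN
  have hn' : (0:ℝ) < n := by exact_mod_cast hn
  refine ⟨fun k => 3 ^ m * (1 / (2 * N) * ‖AA N (0 - nd N k)‖ ^ 2), fun k => by positivity, ?_, ?_⟩
  · rw [← Finset.mul_sum, ← Finset.mul_sum]
    unfold nd
    rw [sum_AA N hN 0, hNdef]
    push_cast; field_simp; ring
  · intro T hT θ
    have hf := loc_mem (m := m) hT θ
    have hb := repr_bound N hN hf θ θ
    have hDd : HasDerivAt (fun φ => DD n (φ + -θ)) (deriv (DD n) 0) θ := by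
      have h1 : HasDerivAt (DD n) (deriv (DD n) 0) (θ + -θ) := by
        rw [add_neg_cancel]; exact ((TP_deriv (DD_mem n)).1 0).hasDerivAt
      exact h1.comp_add_const θ (-θ)
    have hd : deriv (loc n m T θ) θ = deriv T θ + T θ * (m * deriv (DD n) 0) := by
      have h1 := ((TP_deriv hT).1 θ).hasDerivAt.mul (hDd.pow m)
      have h2 : HasDerivAt (loc n m T θ) _ θ := h1
      rw [h2.deriv]
      simp [DD_zero n hn]
    have h1 : ‖deriv T θ‖ ≤ ‖deriv (loc n m T θ) θ‖ + m * n * ‖T θ‖ := by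
      have e : deriv T θ = deriv (loc n m T θ) θ - T θ * (m * deriv (DD n) 0) := by rw [hd]; ring
      rw [e]
      refine (norm_sub_le _ _).trans ?_
      gcongr
      rw [norm_mul, norm_mul, Complex.norm_natCast]
      calc _ ≤ ‖T θ‖ * (m * n) := by gcongr; exact DD_deriv_zero n hn
        _ = _ := by ring
    have hw := (ww_pos hn β θ).le
    calc ww n β θ * ‖deriv T θ‖
        ≤ ww n β θ * ((∑ k ∈ Finset.range (4 * N),
          (1 / (2 * N) * ‖AA N (θ - θ - nd N k)‖ ^ 2) * ‖loc n m T θ (θ + nd N k)‖)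
            + m * n * ‖T θ‖) := by
          gcongr; exact h1.trans (by gcongr; exact hb)
      _ = m * n * (ww n β θ * ‖T θ‖) + ∑ k ∈ Finset.range (4 * N),
          (1 / (2 * N) * ‖AA N (0 - nd N k)‖ ^ 2) *
            (ww n β θ * ‖loc n m T θ (θ + nd N k)‖) := by
          rw [mul_add, Finset.mul_sum, add_comm, sub_self]
          congr 1
          · ring
          · refine Finset.sum_congr rfl fun k _ => by ring
      _ ≤ _ := by
          refine add_le_add le_rfl (Finset.sum_le_sum fun k _ => ?_)
          dsimp only
          calc _ ≤ (1 / (2 * N) * ‖AA N (0 - nd N k)‖ ^ 2) *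
                (3 ^ m * (ww n β (θ + nd N k) * ‖T (θ + nd N k)‖)) := by
                exact mul_le_mul_of_nonneg_left (ww_loc hn T β θ _ hm) (by positivity)
            _ = _ := by ring

lemma P2 (n m : ℕ) (hn : 0 < n) (β : ℝ) (hm : |β| ≤ m) (h : ℝ) (hh : 0 ≤ h) :
    ∃ c : ℕ → ℝ, (∀ k, 0 ≤ c k) ∧
      ∑ k ∈ Finset.range (4 * ((m + 1) * n)), c k = 2 * ((m + 1) * n) * 3 ^ m * h ∧
      ∀ T ∈ TP n, ∀ θ, ww n β θ * ‖T θ‖ ≤ ww n β θ * ‖T (θ + h)‖ +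
        ∑ k ∈ Finset.range (4 * ((m + 1) * n)),
          c k * (ww n β (θ + nd ((m + 1) * n) k) * ‖T (θ + nd ((m + 1) * n) k)‖) := by
  set N := (m + 1) * n with hNdef
  have hN : 0 < N := by positivity
  have hN' : (0:ℝ) < N := by exact_mod_cast hN
  have hn' : (0:ℝ) < n := by exact_mod_cast hn
  have hAc : ∀ k, Continuous fun u => 1 / (2 * (N:ℝ)) * ‖AA N (u - nd N k)‖ ^ 2 := by
    intro k
    have := TP_cont (AA_mem N)
    fun_prop
  have hd0 : ∀ k, 0 ≤ ∫ u in (0:ℝ)..h, 1 / (2 * (N:ℝ)) * ‖AA N (u - nd N k)‖ ^ 2 := fun k =>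
    intervalIntegral.integral_nonneg hh fun u _ => by positivity
  refine ⟨fun k => 3 ^ m * ∫ u in (0:ℝ)..h, 1 / (2 * (N:ℝ)) * ‖AA N (u - nd N k)‖ ^ 2,
    fun k => mul_nonneg (by positivity) (hd0 k), ?_, ?_⟩
  · rw [← Finset.mul_sum, ← intervalIntegral.integral_finsetSum
      (fun k _ => (hAc k).intervalIntegrable _ _)]
    have : ∀ u, ∑ k ∈ Finset.range (4 * N), 1 / (2 * (N:ℝ)) * ‖AA N (u - nd N k)‖ ^ 2 = (2 * N : ℝ) := by
      intro u
      rw [← Finset.mul_sum]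
      unfold nd
      rw [sum_AA N hN u]; field_simp; ring
    simp_rw [this]
    rw [intervalIntegral.integral_const, hNdef]
    push_cast; simp; ring
  · intro T hT θ
    set f := loc n m T θ with hfdef
    have hf : f ∈ TP N := loc_mem (m := m) hT θ
    have hfc := TP_cont hf
    have hdc := TP_cont (TP_deriv hf).2
    have h1 : f (θ + h) - f θ = ∫ u in (0:ℝ)..h, deriv f (θ + u) := by
      have := intervalIntegral.integral_eq_sub_of_hasDerivAt (a := θ) (b := θ + h)
        (fun x _ => ((TP_deriv hf).1 x).hasDerivAt) (hdc.intervalIntegrable _ _)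
      rw [← this, intervalIntegral.integral_comp_add_left (fun u => deriv f u) θ]
      simp
    have h2 : ‖f (θ + h) - f θ‖ ≤ ∑ k ∈ Finset.range (4 * N),
        (∫ u in (0:ℝ)..h, 1 / (2 * (N:ℝ)) * ‖AA N (u - nd N k)‖ ^ 2) * ‖f (θ + nd N k)‖ := by
      rw [h1]
      refine (intervalIntegral.norm_integral_le_integral_norm hh).trans ?_
      simp_rw [← intervalIntegral.integral_mul_const]
      rw [← intervalIntegral.integral_finsetSum (f := fun k u =>
          1 / (2 * (N:ℝ)) * ‖AA N (u - nd N k)‖ ^ 2 * ‖f (θ + nd N k)‖)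
        (fun k _ => ((hAc k).mul continuous_const).intervalIntegrable _ _)]
      refine intervalIntegral.integral_mono_on hh ?_ ?_ ?_
      · exact (by fun_prop : Continuous fun u => ‖deriv f (θ + u)‖).intervalIntegrable _ _
      · exact (continuous_finsetSum _ fun k _ =>
          (hAc k).mul continuous_const).intervalIntegrable _ _
      · intro u _
        have := repr_bound N hN hf (θ + u) θ
        rw [add_sub_cancel_left] at this
        exact this
    have h3 : ‖f (θ + h)‖ ≤ ‖T (θ + h)‖ := by
      rw [hfdef, loc_apply, norm_mul, norm_pow]
      exact mul_le_of_le_one_right (norm_nonneg _) (pow_le_one₀ (norm_nonneg _) (norm_DD_le _ _))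
    have h4 : f θ = T θ := by
      have := loc_apply n m T θ 0
      simpa [DD_zero n hn] using this
    have h5 : ‖T θ‖ ≤ ‖T (θ + h)‖ + ‖f (θ + h) - f θ‖ := by
      rw [← h4]
      have : f θ = f (θ + h) - (f (θ + h) - f θ) := by ring
      calc ‖f θ‖ = ‖f (θ + h) - (f (θ + h) - f θ)‖ := by rw [← this]
        _ ≤ ‖f (θ + h)‖ + ‖f (θ + h) - f θ‖ := norm_sub_le _ _
        _ ≤ _ := by gcongr
    have hw := (ww_pos hn β θ).le
    calc ww n β θ * ‖T θ‖
        ≤ ww n β θ * (‖T (θ + h)‖ + ∑ k ∈ Finset.range (4 * N),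
        (∫ u in (0:ℝ)..h, 1 / (2 * (N:ℝ)) * ‖AA N (u - nd N k)‖ ^ 2) * ‖f (θ + nd N k)‖) := by
          gcongr; exact h5.trans (by gcongr)
      _ = ww n β θ * ‖T (θ + h)‖ + ∑ k ∈ Finset.range (4 * N),
        (∫ u in (0:ℝ)..h, 1 / (2 * (N:ℝ)) * ‖AA N (u - nd N k)‖ ^ 2)
          * (ww n β θ * ‖f (θ + nd N k)‖) := by
          rw [mul_add, Finset.mul_sum]
          congr 1
          refine Finset.sum_congr rfl fun k _ => by ring
      _ ≤ _ := by
          refine add_le_add le_rfl (Finset.sum_le_sum fun k _ => ?_)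
          dsimp only
          calc _ ≤ (∫ u in (0:ℝ)..h, 1 / (2 * (N:ℝ)) * ‖AA N (u - nd N k)‖ ^ 2) *
                (3 ^ m * (ww n β (θ + nd N k) * ‖T (θ + nd N k)‖)) := by
                refine mul_le_mul_of_nonneg_left ?_ (hd0 k)
                exact ww_loc hn T β θ _ hm
            _ = _ := by ring


abbrev mP : Measure ℝ := volume.restrict (Ioc (-π) π)
abbrev mH : Measure ℝ := volume.restrict (Ioo 0 π)

lemma norm_period {g : ℝ → ℝ} (hg : Continuous g) (hp : Function.Periodic g (2 * π)) (p : ℝ≥0∞)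
    (a : ℝ) : eLpNorm g p (volume.restrict (Ioc a (a + 2 * π))) = eLpNorm g p mP := by
  have : Fact (0 < 2 * π) := ⟨by positivity⟩
  have key : ∀ b : ℝ, eLpNorm g p (volume.restrict (Ioc b (b + 2 * π))) =
      eLpNorm (hp.lift) p (volume : Measure (AddCircle (2 * π))) := by
    intro b
    have hc : Continuous (hp.lift : AddCircle (2 * π) → ℝ) := by
      refine continuous_quot_lift _ ?_
      exact hg
    rw [← eLpNorm_comp_measurePreserving hc.aestronglyMeasurable
      (AddCircle.measurePreserving_mk (2 * π) b)]
    rfl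
  rw [key a, ← key (-π)]
  congr 3; ring

lemma norm_shift {g : ℝ → ℝ} (hg : Continuous g) (hp : Function.Periodic g (2 * π)) (p : ℝ≥0∞)
    (s : ℝ) : eLpNorm (fun θ => g (θ + s)) p mP = eLpNorm g p mP := by
  have h1 : MeasurePreserving (fun θ : ℝ => θ + s) mP
      (volume.restrict (Ioc (-π + s) (-π + s + 2 * π))) := by
    have := (measurePreserving_add_right (volume : Measure ℝ) s).restrict_preimage
      (s := Ioc (-π + s) (-π + s + 2 * π)) measurableSet_Ioc
    have e : (fun x : ℝ => x + s) ⁻¹' Ioc (-π + s) (-π + s + 2 * π) = Ioc (-π) π := by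
      ext x; simp only [mem_preimage, mem_Ioc]
      constructor <;> rintro ⟨h1, h2⟩ <;> constructor <;> linarith
    rw [e] at this
    exact this
  have := eLpNorm_comp_measurePreserving (p := p) hg.aestronglyMeasurable h1
  rw [← norm_period hg hp p (-π + s), ← this]
  rfl

lemma norm_comb {p : ℝ≥0∞} (hp1 : 1 ≤ p) {F H G : ℝ → ℝ} (hH : Continuous H) (hG : Continuous G)
    (hGp : Function.Periodic G (2 * π)) (c s : ℕ → ℝ) (L : ℕ) (hc : ∀ k, 0 ≤ c k)
    (h : ∀ θ, |F θ| ≤ H θ + ∑ k ∈ Finset.range L, c k * G (θ + s k)) :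
    eLpNorm F p mP ≤ eLpNorm H p mP +
      ENNReal.ofReal (∑ k ∈ Finset.range L, c k) * eLpNorm G p mP := by
  have e1 : eLpNorm F p mP ≤ eLpNorm (H + ∑ k ∈ Finset.range L, c k • fun θ => G (θ + s k)) p mP := by
    refine eLpNorm_mono_real fun θ => ?_
    rw [Real.norm_eq_abs]
    simpa using h θ
  have hm : ∀ k, AEStronglyMeasurable (c k • fun θ => G (θ + s k)) mP := fun k =>
    (Continuous.const_smul (by fun_prop) _ : Continuous (c k • fun θ => G (θ + s k))).aestronglyMeasurable
  refine e1.trans ((eLpNorm_add_le hH.aestronglyMeasurable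
    (Finset.aestronglyMeasurable_sum _ fun k _ => hm k) hp1).trans ?_)
  gcongr
  refine (eLpNorm_sum_le (fun k _ => hm k) hp1).trans ?_
  rw [ENNReal.ofReal_sum_of_nonneg fun k _ => hc k, Finset.sum_mul]
  refine Finset.sum_le_sum fun k _ => ?_
  rw [eLpNorm_const_smul, norm_shift hG hGp, Real.enorm_eq_ofReal (hc k)]

lemma absorb {x a : ℝ≥0∞} (hx : x ≠ ⊤) (h : x ≤ a + ENNReal.ofReal (1 / 2) * x) : x ≤ 2 * a := by
  by_cases ha : a = ⊤
  · simp [ha]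
  lift x to NNReal using hx
  lift a to NNReal using ha
  have : ENNReal.ofReal (1 / 2) = ((1 / 2 : NNReal) : ℝ≥0∞) := by
    rw [ENNReal.ofReal]; congr; ext; simp
  rw [this] at h
  norm_cast at h ⊢
  have h' : (x : ℝ) ≤ a + 1 / 2 * x := by exact_mod_cast h
  have : (x : ℝ) ≤ 2 * a := by linarith
  exact_mod_cast this

lemma norm_fin {g : ℝ → ℝ} (hg : Continuous g) (p : ℝ≥0∞) : eLpNorm g p mP ≠ ⊤ := by
  obtain ⟨C, hC⟩ := isCompact_Icc.exists_bound_of_continuousOn (s := Icc (-π) π) hg.continuousOn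
  have : MemLp g p mP := by
    refine MemLp.of_bound hg.aestronglyMeasurable C ?_
    filter_upwards [ae_restrict_mem measurableSet_Ioc] with x hx
    exact hC x (Ioc_subset_Icc_self hx)
  exact this.2.ne

/-- weighted modulus -/
def gg (n : ℕ) (β : ℝ) (T : ℝ → ℂ) (θ : ℝ) : ℝ := ww n β θ * ‖T θ‖
def vv (β : ℝ) (T : ℝ → ℂ) (θ : ℝ) : ℝ := |sin θ| ^ β * ‖T θ‖

lemma gg_cont {n : ℕ} (hn : 0 < n) (β : ℝ) {T : ℝ → ℂ} (hT : Continuous T) :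
    Continuous (gg n β T) := (ww_cont hn β).mul hT.norm
lemma gg_per (n : ℕ) (β : ℝ) {T : ℝ → ℂ} (hT : Function.Periodic T (2 * π)) :
    Function.Periodic (gg n β T) (2 * π) := by
  intro θ; simp only [gg]; rw [ww_per n β θ, hT θ]
lemma vv_cont {β : ℝ} (hβ : 0 ≤ β) {T : ℝ → ℂ} (hT : Continuous T) : Continuous (vv β T) := by
  have : Continuous fun θ : ℝ => |sin θ| ^ β :=
    Continuous.rpow_const (by fun_prop) fun θ => Or.inr hβ
  exact this.mul hT.norm
lemma vv_per (β : ℝ) {T : ℝ → ℂ} (hT : Function.Periodic T (2 * π)) :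
    Function.Periodic (vv β T) (2 * π) := by
  intro θ; simp only [vv]; rw [hT θ, sin_add_two_pi]
lemma gg_nonneg {n : ℕ} (hn : 0 < n) (β : ℝ) (T : ℝ → ℂ) (θ : ℝ) : 0 ≤ gg n β T θ :=
  mul_nonneg (ww_pos hn β θ).le (norm_nonneg _)
lemma vv_nonneg (β : ℝ) (T : ℝ → ℂ) (θ : ℝ) : 0 ≤ vv β T θ := by unfold vv; positivity

/-- weighted Bernstein -/
lemma bern (p : ℝ≥0∞) (hp : 1 ≤ p) (β : ℝ) : ∃ C > (0:ℝ), ∀ n : ℕ, 0 < n → ∀ T ∈ TP n,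
    eLpNorm (gg n β (deriv T)) p mP ≤ ENNReal.ofReal (C * n) * eLpNorm (gg n β T) p mP := by
  obtain ⟨m, hm⟩ := exists_nat_ge |β|
  refine ⟨m + 2 * (m + 1) * 3 ^ m, by positivity, fun n hn T hT => ?_⟩
  obtain ⟨c, hc0, hcs, hc⟩ := P1 n m hn β hm
  have hg := gg_cont hn β (TP_cont hT)
  have hgp := gg_per n β (TP_per hT)
  have := norm_comb hp (F := gg n β (deriv T)) (H := (m * n : ℝ) • gg n β T) (G := gg n β T)
    (hg.const_smul _) hg hgp c (nd ((m + 1) * n)) _ hc0 (fun θ => by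
      rw [abs_of_nonneg (gg_nonneg hn _ _ _)]
      exact hc T hT θ)
  rw [hcs, eLpNorm_const_smul, Real.enorm_eq_ofReal (by positivity), ← add_mul,
    ← ENNReal.ofReal_add (by positivity) (by positivity)] at this
  refine this.trans (le_of_eq ?_)
  congr 2; ring

/-- step size -/
lemma step_exists (m : ℕ) : ∃ c : ℝ, 0 < c ∧ c ≤ 1 ∧ 2 * ((m:ℝ) + 1) * 3 ^ m * c = 1 / 2 := by
  have h3 : (1:ℝ) ≤ 3 ^ m := one_le_pow₀ (by norm_num)
  have hm : (0:ℝ) ≤ m := by positivity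
  refine ⟨1 / (4 * (m + 1) * 3 ^ m), by positivity, ?_, ?_⟩
  · rw [div_le_one (by positivity)]; nlinarith
  · field_simp; norm_num

lemma key_pos (p : ℝ≥0∞) (hp : 1 ≤ p) (β : ℝ) (hβ : 0 ≤ β) : ∃ C > (0:ℝ), ∀ n : ℕ, 0 < n →
    ∀ T ∈ TP n, eLpNorm (gg n β T) p mP ≤ ENNReal.ofReal C * eLpNorm (vv β T) p mP := by
  obtain ⟨m, hm⟩ := exists_nat_ge |β|
  obtain ⟨c, hc0, hc1, hc⟩ := step_exists m
  have hpi := Real.pi_pos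
  set K : ℝ := (1 + π / c) ^ β with hK
  have hKpos : 0 < K := by positivity
  refine ⟨4 * K, by positivity, fun n hn T hT => ?_⟩
  have hn' : (0:ℝ) < n := by exact_mod_cast hn
  have hn1 : (1:ℝ) ≤ n := by exact_mod_cast hn
  have hh : 0 < c / n := by positivity
  have hh1 : c / n ≤ 1 := (div_le_one hn').2 (hc1.trans hn1)
  obtain ⟨d, hd0, hds, hd⟩ := P2 n m hn β hm (c / n) hh.le
  have hg := gg_cont hn β (TP_cont hT)
  have hgp := gg_per n β (TP_per hT)
  have hv := vv_cont hβ (TP_cont hT)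
  have hvp := vv_per β (TP_per hT)
  have hsin : c / n / π * 2 ≤ |sin (c / n)| := by
    refine le_trans ?_ (le_abs_self _)
    have := Real.mul_le_sin hh.le (by have := Real.pi_gt_three; linarith)
    refine le_trans (le_of_eq ?_) this
    field_simp
  have hwb : ∀ θ : ℝ, ∀ y : ℝ, c / n / π ≤ y → |sin θ| ≤ y → ww n β θ ≤ K * y ^ β := by
    intro θ y hy1 hy2
    have hy0 : 0 ≤ y := (abs_nonneg _).trans hy2
    rw [hK, ← Real.mul_rpow (by positivity) hy0]
    refine Real.rpow_le_rpow (ww_base_pos hn θ).le ?_ hβ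
    have : 1 / (n:ℝ) = π / c * (c / n / π) := by field_simp
    rw [this, add_mul, one_mul]
    gcongr
  have main : ∀ θ, |gg n β T θ| ≤ (K • vv β T + K • fun θ => vv β T (θ + c / n)) θ +
      ∑ k ∈ Finset.range (4 * ((m + 1) * n)), d k * gg n β T (θ + nd ((m + 1) * n) k) := by
    intro θ
    rw [abs_of_nonneg (gg_nonneg hn _ _ _)]
    have h1 := sin_sub_bound (c / n) θ
    rw [add_comm (c / n) θ] at h1
    have hs : 0 ≤ ∑ k ∈ Finset.range (4 * ((m + 1) * n)),
        d k * gg n β T (θ + nd ((m + 1) * n) k) :=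
      Finset.sum_nonneg fun k _ => mul_nonneg (hd0 k) (gg_nonneg hn _ _ _)
    have hv1 := vv_nonneg β T θ
    have hv2 := vv_nonneg β T (θ + c / n)
    simp only [Pi.add_apply, Pi.smul_apply, smul_eq_mul]
    have hv1' := mul_nonneg hKpos.le hv1
    have hv2' := mul_nonneg hKpos.le hv2
    rcases le_total |sin θ| |sin (θ + c / n)| with h | h
    · have h2 := hd T hT θ
      have h3 := hwb θ |sin (θ + c / n)| (by linarith) h
      have h4 : ww n β θ * ‖T (θ + c / n)‖ ≤ K * vv β T (θ + c / n) := by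
        unfold vv; rw [← mul_assoc]; gcongr
      have h5 : gg n β T θ ≤ _ := h2
      refine h5.trans ?_
      have : ∑ k ∈ Finset.range (4 * ((m + 1) * n)),
        d k * gg n β T (θ + nd ((m + 1) * n) k) = ∑ k ∈ Finset.range (4 * ((m + 1) * n)),
          d k * (ww n β (θ + nd ((m + 1) * n) k) * ‖T (θ + nd ((m + 1) * n) k)‖) := rfl
      linarith
    · have h3 := hwb θ |sin θ| (by linarith) le_rfl
      have h4 : gg n β T θ ≤ K * vv β T θ := by
        unfold vv gg; rw [← mul_assoc]; gcongr
      linarith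
  have hv' : Continuous fun θ => vv β T (θ + c / n) := by fun_prop
  have := norm_comb hp ((hv.const_smul K).add (hv'.const_smul K)) hg hgp d _ _ hd0 main
  have e : 2 * (((m:ℝ) + 1) * n) * 3 ^ m * (c / n) = 1 / 2 := by
    rw [← hc]; field_simp
  rw [hds, e] at this
  refine (absorb (norm_fin hg p) this).trans ?_
  have h1 := eLpNorm_add_le (p := p) (μ := mP) (hv.const_smul K).aestronglyMeasurable
    (hv'.const_smul K).aestronglyMeasurable hp
  rw [eLpNorm_const_smul, eLpNorm_const_smul, norm_shift hv hvp,
    Real.enorm_eq_ofReal hKpos.le] at h1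
  calc _ ≤ 2 * (ENNReal.ofReal K * eLpNorm (vv β T) p mP
        + ENNReal.ofReal K * eLpNorm (vv β T) p mP) := by gcongr
    _ = _ := by
      rw [ENNReal.ofReal_mul (by norm_num)]
      have : ENNReal.ofReal 4 = 4 := by norm_num
      rw [this]; ring

/-- Nikolskii -/
lemma nikol (p : ℝ≥0∞) (hp : 1 ≤ p) (hpt : p ≠ ⊤) (β : ℝ) : ∃ C > (0:ℝ), ∀ n : ℕ, 0 < n →
    ∀ T ∈ TP n, ∃ G : ℝ, 0 ≤ G ∧ (∀ θ, gg n β T θ ≤ G) ∧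
      ENNReal.ofReal (G * (1 / n : ℝ) ^ (1 / p.toReal)) ≤
        ENNReal.ofReal C * eLpNorm (gg n β T) p mP := by
  obtain ⟨m, hm⟩ := exists_nat_ge |β|
  obtain ⟨c, hc0, hc1, hc⟩ := step_exists m
  have hp0 : p ≠ 0 := (zero_lt_one.trans_le hp).ne'
  have hpr : 0 < p.toReal := ENNReal.toReal_pos hp0 hpt
  refine ⟨2 * 2 ^ m / c ^ (1 / p.toReal), by positivity, fun n hn T hT => ?_⟩
  have hn' : (0:ℝ) < n := by exact_mod_cast hn
  have hn1 : (1:ℝ) ≤ n := by exact_mod_cast hn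
  have hg := gg_cont hn β (TP_cont hT)
  have hgp := gg_per n β (TP_per hT)
  obtain ⟨x, hx, hmax⟩ := isCompact_Icc.exists_isMaxOn (s := Icc 0 (2 * π))
    (nonempty_Icc.2 (by positivity)) hg.continuousOn
  have hG : ∀ θ, gg n β T θ ≤ gg n β T x := by
    intro θ
    obtain ⟨y, hy, hyx⟩ := hgp.exists_mem_Ico₀ (by positivity) θ
    rw [hyx]
    exact hmax (Ico_subset_Icc_self hy)
  refine ⟨gg n β T x, gg_nonneg hn _ _ _, hG, ?_⟩
  set G := gg n β T x with hGdef
  have hG0 : 0 ≤ G := gg_nonneg hn _ _ _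
  have hlow : ∀ h, 0 ≤ h → h ≤ c / n → G / (2 * 2 ^ m) ≤ gg n β T (x + h) := by
    intro h h0 h1
    obtain ⟨d, hd0, hds, hd⟩ := P2 n m hn β hm h h0
    have h2 := hd T hT x
    have h3 : ∑ k ∈ Finset.range (4 * ((m + 1) * n)),
          d k * (ww n β (x + nd ((m + 1) * n) k) * ‖T (x + nd ((m + 1) * n) k)‖) ≤ 1 / 2 * G := by
      calc _ ≤ ∑ k ∈ Finset.range (4 * ((m + 1) * n)), d k * G :=
            Finset.sum_le_sum fun k _ => mul_le_mul_of_nonneg_left (hG _) (hd0 k)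
        _ = 2 * ((m + 1) * n) * 3 ^ m * h * G := by rw [← Finset.sum_mul, hds]
        _ ≤ 2 * ((m + 1) * n) * 3 ^ m * (c / n) * G := by gcongr
        _ = 1 / 2 * G := by rw [← hc]; field_simp
    have h4 : ww n β x ≤ ww n β (x + h) * 2 ^ m := by
      refine (ww_shift hn β x h).trans ?_
      have hw := (ww_pos hn β (x + h)).le
      gcongr
      have h5 : n * |sin h| ≤ 1 := by
        have : |sin h| ≤ h := by
          have := Real.abs_sin_le_abs (x := h)
          rwa [abs_of_nonneg h0] at this
        calc n * |sin h| ≤ n * (c / n) := by gcongr; linarith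
          _ = c := by field_simp
          _ ≤ 1 := hc1
      have h6 : (1:ℝ) ≤ 1 + n * |sin h| := by
        have : 0 ≤ n * |sin h| := by positivity
        linarith
      calc (1 + n * |sin h|) ^ |β| ≤ (1 + n * |sin h|) ^ (m:ℝ) :=
            Real.rpow_le_rpow_of_exponent_le h6 hm
        _ ≤ (2:ℝ) ^ (m : ℝ) := by
            refine Real.rpow_le_rpow (by linarith) (by linarith) (by positivity)
        _ = 2 ^ m := Real.rpow_natCast _ _
    have h7 : ww n β x * ‖T (x + h)‖ ≤ 2 ^ m * gg n β T (x + h) := by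
      unfold gg
      calc _ ≤ (ww n β (x + h) * 2 ^ m) * ‖T (x + h)‖ := by gcongr
        _ = _ := by ring
    have h8 : G = ww n β x * ‖T x‖ := rfl
    rw [div_le_iff₀ (by positivity)]
    linarith
  have e1 : eLpNorm (fun _ : ℝ => G / (2 * 2 ^ m)) p (volume.restrict (Ioc x (x + c / n))) ≤
      eLpNorm (gg n β T) p (volume.restrict (Ioc x (x + c / n))) := by
    refine eLpNorm_mono_ae ?_
    filter_upwards [ae_restrict_mem measurableSet_Ioc] with y hy
    have := hlow (y - x) (by linarith [hy.1]) (by linarith [hy.2])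
    rw [add_sub_cancel] at this
    rw [Real.norm_of_nonneg (by positivity), Real.norm_of_nonneg (gg_nonneg hn _ _ _)]
    exact this
  have e2 : eLpNorm (gg n β T) p (volume.restrict (Ioc x (x + c / n))) ≤
      eLpNorm (gg n β T) p mP := by
    rw [← norm_period hg hgp p x]
    refine eLpNorm_mono_measure _ (Measure.restrict_mono ?_ le_rfl)
    apply Ioc_subset_Ioc_right
    have : c / n ≤ 1 := (div_le_one hn').2 (hc1.trans hn1)
    have := Real.pi_gt_three
    linarith
  have e3 := e1.trans e2
  rw [eLpNorm_const' _ hp0 hpt, Measure.restrict_apply_univ, Real.volume_Ioc, add_sub_cancel_left,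
    Real.enorm_eq_ofReal (by positivity), ENNReal.ofReal_rpow_of_nonneg (by positivity) (by positivity),
    ← ENNReal.ofReal_mul (by positivity)] at e3
  calc _ = ENNReal.ofReal (2 * 2 ^ m / c ^ (1 / p.toReal)) *
        ENNReal.ofReal (G / (2 * 2 ^ m) * (c / n) ^ (1 / p.toReal)) := by
        rw [← ENNReal.ofReal_mul (by positivity)]
        congr 1
        have : (c / n) ^ (1 / p.toReal) = c ^ (1 / p.toReal) * (1 / n : ℝ) ^ (1 / p.toReal) := by
          rw [← Real.mul_rpow (by positivity) (by positivity)]; congr 1; ring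
        rw [this]
        have : c ^ (1 / p.toReal) ≠ 0 := by positivity
        field_simp
    _ ≤ _ := by gcongr


lemma symm_norm {g : ℝ → ℝ} (hg : Measurable g) (he : ∀ θ, g (-θ) = g θ) {p : ℝ≥0∞} (hp : 1 ≤ p) :
    eLpNorm g p mP ≤ 2 * eLpNorm g p mH := by
  have e0 : mP = volume.restrict (Ioc (-π) 0 ∪ Ioc 0 π) := by
    rw [Ioc_union_Ioc_eq_Ioc (by linarith [pi_pos]) pi_pos.le]
  have h1 : eLpNorm g p (volume.restrict (Ioc (-π) 0)) = eLpNorm g p mH := by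
    have hm : MeasurePreserving (fun θ : ℝ => -θ) mH (volume.restrict (Ioo (-π) 0)) := by
      have := (Measure.measurePreserving_neg (volume : Measure ℝ)).restrict_preimage
        (s := Ioo (-π) 0) measurableSet_Ioo
      have e : (fun x : ℝ => - x) ⁻¹' Ioo (-π) 0 = Ioo 0 π := by
        ext x; simp only [mem_preimage, mem_Ioo]
        constructor <;> rintro ⟨h1, h2⟩ <;> constructor <;> linarith
      rw [mH, ← e]
      exact this
    rw [← Measure.restrict_congr_set (Ioo_ae_eq_Ioc (a := -π) (b := 0)),
      ← eLpNorm_comp_measurePreserving hg.aestronglyMeasurable hm]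
    congr 1; ext θ; exact he θ
  have h2 : eLpNorm g p (volume.restrict (Ioc 0 π)) = eLpNorm g p mH := by
    rw [mH, Measure.restrict_congr_set (Ioo_ae_eq_Ioc (a := 0) (b := π))]
  have e1 : eLpNorm g p mP ≤ eLpNorm ((Ioc (-π) 0).indicator g + (Ioc 0 π).indicator g) p mP := by
    refine eLpNorm_mono_ae ?_
    filter_upwards [ae_restrict_mem measurableSet_Ioc] with θ hθ
    by_cases h : θ ≤ 0
    · have h3 : θ ∈ Ioc (-π) 0 := ⟨hθ.1, h⟩
      have h4 : θ ∉ Ioc 0 π := fun h' => absurd h'.1 (not_lt.2 h)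
      simp [h3, h4]
    · have h3 : θ ∉ Ioc (-π) 0 := fun h' => h h'.2
      have h4 : θ ∈ Ioc 0 π := ⟨not_le.1 h, hθ.2⟩
      simp [h3, h4]
  refine e1.trans ((eLpNorm_add_le (hg.indicator measurableSet_Ioc).aestronglyMeasurable
    (hg.indicator measurableSet_Ioc).aestronglyMeasurable hp).trans ?_)
  rw [eLpNorm_indicator_eq_eLpNorm_restrict measurableSet_Ioc,
    eLpNorm_indicator_eq_eLpNorm_restrict measurableSet_Ioc,
    Measure.restrict_restrict measurableSet_Ioc, Measure.restrict_restrict measurableSet_Ioc,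
    inter_eq_left.2 (Ioc_subset_Ioc_right pi_pos.le),
    inter_eq_left.2 (Ioc_subset_Ioc_left (by linarith [pi_pos])), h1, h2, two_mul]

lemma E2 {p : ℝ≥0∞} (hp : 1 ≤ p) (β : ℝ) : ∃ C > (0:ℝ), ∀ n : ℕ, 0 < n → ∀ T ∈ TP n,
    (∀ θ, ‖T (-θ)‖ = ‖T θ‖) →
    eLpNorm (gg n β T) p mP ≤ ENNReal.ofReal C * eLpNorm (vv β T) p mH := by
  rcases le_or_gt 0 β with hβ | hβ
  · obtain ⟨C, hC, h⟩ := key_pos p hp β hβ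
    refine ⟨C * 2, by positivity, fun n hn T hT he => (h n hn T hT).trans ?_⟩
    rw [ENNReal.ofReal_mul hC.le, mul_assoc]
    gcongr
    rw [show ENNReal.ofReal 2 = 2 by norm_num]
    refine symm_norm (vv_cont hβ (TP_cont hT)).measurable (fun θ => ?_) hp
    simp only [vv, Real.sin_neg, abs_neg, he]
  · refine ⟨2, by norm_num, fun n hn T hT he => ?_⟩
    rw [show ENNReal.ofReal 2 = 2 by norm_num]
    refine (symm_norm (gg_cont hn β (TP_cont hT)).measurable (fun θ => ?_) hp).trans ?_
    · simp only [gg, ww, Real.sin_neg, abs_neg, he]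
    · gcongr 2 * ?_
      refine eLpNorm_mono_ae ?_
      filter_upwards [ae_restrict_mem measurableSet_Ioo] with θ hθ
      have hs : 0 < Real.sin θ := Real.sin_pos_of_mem_Ioo hθ
      rw [Real.norm_of_nonneg (gg_nonneg hn ..), Real.norm_of_nonneg (vv_nonneg ..)]
      simp only [gg, vv, ww]
      gcongr ?_ * _
      refine Real.rpow_le_rpow_of_nonpos (by positivity) ?_ hβ.le
      have : (0:ℝ) ≤ 1 / n := by positivity
      linarith


def phi (a β : ℝ) : ℝ → ℝ := (Ioc 0 a).indicator (fun θ => θ ^ β)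

lemma phi_meas (a β : ℝ) : Measurable (phi a β) :=
  (measurable_id.pow_const β).indicator measurableSet_Ioc

lemma phi_nonneg (a β θ : ℝ) : 0 ≤ phi a β θ :=
  indicator_nonneg (fun _ h => Real.rpow_nonneg h.1.le _) _

lemma phi_norm {p : ℝ≥0∞} (hp : 1 ≤ p) (hpt : p ≠ ⊤) {β a : ℝ} (hβ : -(1 / p.toReal) < β)
    (ha : 0 < a) : eLpNorm (phi a β) p volume =
      ENNReal.ofReal ((a ^ (β * p.toReal + 1) / (β * p.toReal + 1)) ^ (1 / p.toReal)) := by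
  have hp0 : p ≠ 0 := (zero_lt_one.trans_le hp).ne'
  have hP : 0 < p.toReal := ENNReal.toReal_pos hp0 hpt
  have hr : -1 < β * p.toReal := by
    have := mul_lt_mul_of_pos_right hβ hP
    rwa [neg_mul, one_div_mul_cancel hP.ne'] at this
  have hr1 : 0 < β * p.toReal + 1 := by linarith
  rw [phi, eLpNorm_indicator_eq_eLpNorm_restrict measurableSet_Ioc,
    eLpNorm_eq_lintegral_rpow_enorm_toReal hp0 hpt]
  have e : ∫⁻ x in Ioc 0 a, ‖x ^ β‖ₑ ^ p.toReal =
      ∫⁻ x in Ioc 0 a, ENNReal.ofReal (x ^ (β * p.toReal)) := by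
    refine setLIntegral_congr_fun measurableSet_Ioc fun x hx => ?_
    have hx0 : 0 ≤ x := hx.1.le
    rw [Real.enorm_eq_ofReal (by positivity), ENNReal.ofReal_rpow_of_nonneg (by positivity) hP.le,
      Real.rpow_mul hx0]
  have hi : IntervalIntegrable (fun x : ℝ => x ^ (β * p.toReal)) volume 0 a :=
    intervalIntegral.intervalIntegrable_rpow' hr
  rw [e, ← ofReal_integral_eq_lintegral_ofReal
    ((intervalIntegrable_iff_integrableOn_Ioc_of_le ha.le).1 hi), 
    ← intervalIntegral.integral_of_le ha.le, integral_rpow (Or.inl hr),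
    Real.zero_rpow hr1.ne', sub_zero, ENNReal.ofReal_rpow_of_nonneg (by positivity) (by positivity)]
  filter_upwards [ae_restrict_mem measurableSet_Ioc] with x hx
  exact Real.rpow_nonneg hx.1.le _

lemma vv_small {n : ℕ} (hn : 0 < n) {β : ℝ} (hβ : β < 0) {T : ℝ → ℂ} {G : ℝ}
    {θ s : ℝ} (hG : gg n β T θ ≤ G) (hs0 : 0 < s) (hs : s ≤ π / 2) (hss : sin θ = sin s) 
    (hlt : sin θ < 1 / n) :
    vv β T θ ≤ G * (π / n) ^ (-β) * phi (π / (2 * n)) β s := by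
  have hn' : (0:ℝ) < n := by exact_mod_cast hn
  have h1 : 2 / π * s ≤ sin θ := hss ▸ Real.mul_le_sin hs0.le hs
  have hsp : 0 < sin θ := lt_of_lt_of_le (by positivity) h1
  have hmem : s ∈ Ioc 0 (π / (2 * n)) := by
    refine ⟨hs0, ?_⟩
    have : 2 / π * s ≤ 1 / n := h1.trans hlt.le
    calc s = π / 2 * (2 / π * s) := by field_simp
      _ ≤ π / 2 * (1 / n) := by gcongr
      _ = _ := by field_simp
  simp only [vv, gg, ww, phi, indicator_of_mem hmem, abs_of_pos hsp] at hG ⊢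
  have h2 : sin θ ^ β ≤ (2 / π * s) ^ β :=
    Real.rpow_le_rpow_of_nonpos (by positivity) h1 hβ.le
  have h3 : (2 / (n:ℝ)) ^ β ≤ (sin θ + 1 / n) ^ β := by
    refine Real.rpow_le_rpow_of_nonpos (by positivity) ?_ hβ.le
    have : (2:ℝ) / n = 1 / n + 1 / n := by ring
    linarith
  have h4 : (2 / (n:ℝ)) ^ β * ‖T θ‖ ≤ G := le_trans (by gcongr) hG
  have h5 : (2 / π * s) ^ β = (2 / (n:ℝ)) ^ β * ((π / n) ^ (-β) * s ^ β) := by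
    rw [Real.rpow_neg (by positivity), ← Real.inv_rpow (by positivity),
      ← Real.mul_rpow (by positivity) (by positivity), ← Real.mul_rpow (by positivity) (by positivity)]
    congr 1; field_simp
  calc sin θ ^ β * ‖T θ‖ ≤ (2 / π * s) ^ β * ‖T θ‖ := by gcongr
    _ = ((2 / (n:ℝ)) ^ β * ‖T θ‖) * ((π / n) ^ (-β) * s ^ β) := by rw [h5]; ring
    _ ≤ G * ((π / n) ^ (-β) * s ^ β) := by gcongr
    _ = _ := by ring

lemma vv_pt {n : ℕ} (hn : 0 < n) {β : ℝ} (hβ : β < 0) {T : ℝ → ℂ} {G : ℝ} (hG0 : 0 ≤ G)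
    {θ : ℝ} (hθ : θ ∈ Ioo 0 π) (hG : gg n β T θ ≤ G) :
    vv β T θ ≤ 2 ^ (-β) * gg n β T θ +
      (G * (π / n) ^ (-β) * phi (π / (2 * n)) β θ + 
       G * (π / n) ^ (-β) * phi (π / (2 * n)) β (π - θ)) := by
  have hn' : (0:ℝ) < n := by exact_mod_cast hn
  have hs : 0 < sin θ := Real.sin_pos_of_mem_Ioo hθ
  have a1 : 0 ≤ G * (π / n) ^ (-β) * phi (π / (2 * n)) β θ :=
    mul_nonneg (by positivity) (phi_nonneg ..)
  have a2 : 0 ≤ G * (π / n) ^ (-β) * phi (π / (2 * n)) β (π - θ) :=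
    mul_nonneg (by positivity) (phi_nonneg ..)
  have a3 : 0 ≤ 2 ^ (-β) * gg n β T θ := mul_nonneg (by positivity) (gg_nonneg hn ..)
  by_cases h : sin θ < 1 / n
  · rcases le_or_gt θ (π / 2) with h1 | h1
    · have := vv_small hn hβ hG hθ.1 h1 rfl h
      linarith
    · have := vv_small hn hβ hG (s := π - θ) (by linarith [hθ.2]) (by linarith)
        (Real.sin_pi_sub θ).symm h
      linarith
  · push Not at h
    have : vv β T θ ≤ 2 ^ (-β) * gg n β T θ := by
      simp only [vv, gg, ww, abs_of_pos hs]
      rw [← mul_assoc]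
      gcongr ?_ * _
      have h2 : (2 * sin θ) ^ β ≤ (sin θ + 1 / n) ^ β :=
        Real.rpow_le_rpow_of_nonpos (by positivity) (by linarith) hβ.le
      rw [Real.mul_rpow (by positivity) hs.le] at h2
      rw [Real.rpow_neg (by positivity)]
      have h3 : (0:ℝ) < 2 ^ β := by positivity
      rw [inv_mul_eq_div, le_div_iff₀ h3]; linarith
    linarith

lemma mH_le : mH ≤ mP := Measure.restrict_mono_set _ (fun x hx => ⟨by linarith [hx.1, pi_pos], hx.2.le⟩)

lemma E1 {p : ℝ≥0∞} (hp : 1 ≤ p) {β : ℝ} (hβ1 : p ≠ ⊤ → -(1 / p.toReal) < β)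
    (hβ2 : p = ⊤ → 0 ≤ β) : ∃ C > (0:ℝ), ∀ n : ℕ, 0 < n → ∀ T ∈ TP n,
    eLpNorm (vv β T) p mH ≤ ENNReal.ofReal C * eLpNorm (gg n β T) p mP := by
  rcases le_or_gt 0 β with hβ | hβ
  · refine ⟨1, one_pos, fun n hn T hT => ?_⟩
    rw [ENNReal.ofReal_one, one_mul]
    refine (eLpNorm_mono fun θ => ?_).trans (eLpNorm_mono_measure _ mH_le)
    rw [Real.norm_of_nonneg (gg_nonneg hn ..), Real.norm_of_nonneg (vv_nonneg ..)]
    simp only [gg, vv, ww]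
    gcongr
    have : (0:ℝ) ≤ 1 / n := by positivity
    linarith
  have hpt : p ≠ ⊤ := fun h => absurd (hβ2 h) (not_le.2 hβ)
  have hp0 : p ≠ 0 := (zero_lt_one.trans_le hp).ne'
  have hP : 0 < p.toReal := ENNReal.toReal_pos hp0 hpt
  have hr1 : 0 < β * p.toReal + 1 := by
    have := mul_lt_mul_of_pos_right (hβ1 hpt) hP
    rw [neg_mul, one_div_mul_cancel hP.ne'] at this
    linarith
  obtain ⟨C, hC, hN⟩ := nikol p hp hpt β
  set P := p.toReal with hPd
  set K : ℝ := π ^ (-β) * ((π / 2) ^ (β * P + 1) / (β * P + 1)) ^ (1 / P) with hK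
  have hK0 : 0 < K := by positivity
  refine ⟨2 ^ (-β) + 2 * (K * C), by positivity, fun n hn T hT => ?_⟩
  have hn' : (0:ℝ) < n := by exact_mod_cast hn
  obtain ⟨G, hG0, hG, hGN⟩ := hN n hn T hT
  set D : ℝ := G * (π / n) ^ (-β) with hD
  have hD0 : 0 ≤ D := by positivity
  set f := phi (π / (2 * n)) β with hf
  have hfm : Measurable f := phi_meas _ _
  have hfm' : Measurable (fun θ => f (π - θ)) := hfm.comp (measurable_const.sub measurable_id)
  have hgm := (gg_cont hn β (TP_cont hT)).measurable
  have s1 : eLpNorm (vv β T) p mH ≤ eLpNorm ((2:ℝ) ^ (-β) • gg n β T +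
      (D • f + D • fun θ => f (π - θ))) p mH := by
    refine eLpNorm_mono_ae ?_
    filter_upwards [ae_restrict_mem measurableSet_Ioo] with θ hθ
    rw [Real.norm_of_nonneg (vv_nonneg ..)]
    refine le_trans ?_ (le_abs_self _)
    exact vv_pt hn hβ hG0 hθ (hG θ)
  have s2 : eLpNorm ((2:ℝ) ^ (-β) • gg n β T + (D • f + D • fun θ => f (π - θ))) p mH ≤
      ENNReal.ofReal (2 ^ (-β)) * eLpNorm (gg n β T) p mH + (ENNReal.ofReal D * eLpNorm f p mH
        + ENNReal.ofReal D * eLpNorm (fun θ => f (π - θ)) p mH) := by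
    refine (eLpNorm_add_le (hgm.const_smul _).aestronglyMeasurable
      ((hfm.const_smul _).add (hfm'.const_smul _)).aestronglyMeasurable hp).trans ?_
    refine (add_le_add_right (eLpNorm_add_le (hfm.const_smul _).aestronglyMeasurable
      (hfm'.const_smul _).aestronglyMeasurable hp) _).trans ?_
    rw [eLpNorm_const_smul, eLpNorm_const_smul, eLpNorm_const_smul, Real.enorm_eq_ofReal hD0,
      Real.enorm_eq_ofReal (by positivity)]
  have s3 : eLpNorm (fun θ => f (π - θ)) p volume = eLpNorm f p volume :=
    eLpNorm_comp_measurePreserving hfm.aestronglyMeasurable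
      (Measure.measurePreserving_sub_left (volume : Measure ℝ) π)
  have s4 : ENNReal.ofReal D * eLpNorm f p volume ≤
      ENNReal.ofReal (K * C) * eLpNorm (gg n β T) p mP := by
    rw [hf, phi_norm hp hpt (hβ1 hpt) (by positivity), ← ENNReal.ofReal_mul hD0]
    have : D * ((π / (2 * ↑n)) ^ (β * P + 1) / (β * P + 1)) ^ (1 / P) =
        K * (G * (1 / n : ℝ) ^ (1 / P)) := by
      have e1 : (π / (2 * (n:ℝ))) ^ (β * P + 1) / (β * P + 1) =
          (π / 2) ^ (β * P + 1) / (β * P + 1) * (1 / n : ℝ) ^ (β * P + 1) := by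
        rw [show π / (2 * (n:ℝ)) = π / 2 * (1 / n) by field_simp, 
          Real.mul_rpow (by positivity) (by positivity)]
        ring
      have e2 : ((1 / n : ℝ) ^ (β * P + 1)) ^ (1 / P) = (1 / n : ℝ) ^ β * (1 / n : ℝ) ^ (1 / P) := by
        rw [← Real.rpow_mul (by positivity), ← Real.rpow_add (by positivity)]
        congr 1; field_simp
      have e3 : (π / n) ^ (-β) * (1 / n : ℝ) ^ β = π ^ (-β) := by
        rw [show π / n = π * (1 / n) by ring, Real.mul_rpow (by positivity) (by positivity),
          mul_assoc, ← Real.rpow_add (by positivity)]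
        simp
      rw [e1, Real.mul_rpow (by positivity) (by positivity), e2, hD, hK, ← e3]
      ring
    rw [this, ENNReal.ofReal_mul hK0.le, ENNReal.ofReal_mul hK0.le, mul_assoc]
    gcongr
  refine s1.trans (s2.trans ?_)
  have m1 : eLpNorm (gg n β T) p mH ≤ eLpNorm (gg n β T) p mP := eLpNorm_mono_measure _ mH_le
  have m2 : eLpNorm f p mH ≤ eLpNorm f p volume := eLpNorm_mono_measure _ Measure.restrict_le_self
  have m3 : eLpNorm (fun θ => f (π - θ)) p mH ≤ eLpNorm f p volume :=
    s3 ▸ eLpNorm_mono_measure _ Measure.restrict_le_self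
  calc _ ≤ ENNReal.ofReal (2 ^ (-β)) * eLpNorm (gg n β T) p mP +
        (ENNReal.ofReal D * eLpNorm f p volume + ENNReal.ofReal D * eLpNorm f p volume) := by
        gcongr
    _ ≤ ENNReal.ofReal (2 ^ (-β)) * eLpNorm (gg n β T) p mP +
        (ENNReal.ofReal (K * C) * eLpNorm (gg n β T) p mP +
          ENNReal.ofReal (K * C) * eLpNorm (gg n β T) p mP) := by
        gcongr
    _ = _ := by
        rw [ENNReal.ofReal_add (by positivity) (by positivity), ENNReal.ofReal_mul (p := 2) (by norm_num),
          show ENNReal.ofReal 2 = 2 by norm_num]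
        ring


lemma cos_image : cos '' Ioo 0 π = Ioo (-1) 1 := by
  ext x; constructor
  · rintro ⟨θ, hθ, rfl⟩
    have hs : 0 < sin θ := Real.sin_pos_of_mem_Ioo hθ
    have := Real.sin_sq_add_cos_sq θ
    constructor <;> nlinarith
  · rintro ⟨h1, h2⟩
    exact ⟨arccos x, ⟨Real.arccos_pos.2 h2, lt_of_le_of_ne (Real.arccos_le_pi x)
      (fun h => by have := Real.arccos_eq_pi.1 h; linarith)⟩, Real.cos_arccos h1.le h2.le⟩

lemma cos_inj : InjOn cos (Ioo 0 π) := Real.injOn_cos.mono Ioo_subset_Icc_self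

lemma cos_der : ∀ x ∈ Ioo 0 π, HasDerivWithinAt cos (-sin x) (Ioo 0 π) x := fun x _ =>
  (Real.hasDerivAt_cos x).hasDerivWithinAt

lemma wnorm_eq {p : ℝ≥0∞} (hp : 1 ≤ p) (α : ℝ) {f : ℝ → ℝ} (hf : Measurable f) :
    wnorm p α f = eLpNorm (fun θ => f (cos θ) * sin θ ^ (2 * α + 1 / p.toReal)) p mH := by
  have hp0 : p ≠ 0 := (zero_lt_one.trans_le hp).ne'
  have hw : ∀ θ ∈ Ioo 0 π, (1 - cos θ ^ 2) ^ α = sin θ ^ (2 * α) := by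
    intro θ hθ
    have hs : 0 < sin θ := Real.sin_pos_of_mem_Ioo hθ
    rw [show 1 - cos θ ^ 2 = sin θ ^ (2:ℝ) by rw [Real.rpow_two]; linarith [Real.sin_sq_add_cos_sq θ],
      ← Real.rpow_mul hs.le]
  rw [wnorm, ← Measure.restrict_congr_set (Ioo_ae_eq_Icc (a := (-1:ℝ)) (b := 1)), ← cos_image]
  by_cases hpt : p = ⊤
  · subst hpt
    have hmap := map_withDensity_abs_det_fderiv_eq_addHaar (volume : Measure ℝ)
      (measurableSet_Ioo (a := 0) (b := π)).nullMeasurableSet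
      (fun x hx => (cos_der x hx).hasFDerivWithinAt) cos_inj
    rw [← hmap, eLpNorm_map_measure (Measurable.aestronglyMeasurable (by fun_prop))
      Real.measurable_cos.aemeasurable]
    have e : eLpNorm (fun θ => f (cos θ) * sin θ ^ (2 * α + 1 / (⊤:ℝ≥0∞).toReal)) ⊤ mH = 
        eLpNorm ((fun x => f x * (1 - x ^ 2) ^ α) ∘ cos) ⊤ mH := by
      refine eLpNorm_congr_ae ?_
      filter_upwards [ae_restrict_mem measurableSet_Ioo] with θ hθ
      simp [hw θ hθ]
    rw [e, eLpNorm_exponent_top, eLpNorm_exponent_top]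
    refine le_antisymm (eLpNormEssSup_mono_measure _ (withDensity_absolutelyContinuous _ _))
      (eLpNormEssSup_mono_measure _ (withDensity_absolutelyContinuous' ?_ ?_))
    · simp only [ContinuousLinearMap.det_toSpanSingleton]
      exact Measurable.aemeasurable (by fun_prop)
    · filter_upwards [ae_restrict_mem measurableSet_Ioo] with θ hθ
      have hs : 0 < sin θ := Real.sin_pos_of_mem_Ioo hθ
      simp [ContinuousLinearMap.det_toSpanSingleton, hs.ne']
  · have hP : 0 < p.toReal := ENNReal.toReal_pos hp0 hpt
    rw [eLpNorm_eq_lintegral_rpow_enorm_toReal hp0 hpt,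
      eLpNorm_eq_lintegral_rpow_enorm_toReal hp0 hpt,
      lintegral_image_eq_lintegral_abs_deriv_mul measurableSet_Ioo cos_der cos_inj]
    congr 1
    refine setLIntegral_congr_fun measurableSet_Ioo fun θ hθ => ?_
    have hs : 0 < sin θ := Real.sin_pos_of_mem_Ioo hθ
    have e1 : |(-sin θ)| = (sin θ ^ (1 / p.toReal)) ^ p.toReal := by
      rw [abs_neg, abs_of_pos hs, ← Real.rpow_mul hs.le, one_div_mul_cancel hP.ne', Real.rpow_one]
    beta_reduce
    rw [e1, hw θ hθ, Real.rpow_add hs, ← mul_assoc, enorm_mul _ (sin θ ^ (1 / p.toReal)),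
      ENNReal.mul_rpow_of_nonneg _ _ hP.le, ← ENNReal.ofReal_rpow_of_nonneg (by positivity) hP.le,
      Real.enorm_eq_ofReal (r := sin θ ^ (1 / p.toReal)) (by positivity), mul_comm]

def TQ (q : Polynomial ℝ) (θ : ℝ) : ℂ := ((q.eval (cos θ) : ℝ) : ℂ)

lemma cos_mem : (fun θ : ℝ => ((cos θ : ℝ) : ℂ)) ∈ TP 1 := by
  have : (fun θ : ℝ => ((cos θ : ℝ) : ℂ)) = (1 / 2 : ℂ) • (ee 1 + ee (-1)) := by
    funext θ
    simp [ee, Complex.cos]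
    ring
  rw [this]
  exact Submodule.smul_mem _ _ (Submodule.add_mem _ (ee_mem _ _ (by simp)) (ee_mem _ _ (by simp)))

lemma TQ_mem {n : ℕ} {q : Polynomial ℝ} (hq : q.natDegree ≤ n) : TQ q ∈ TP n := by
  have : TQ q = ∑ i ∈ Finset.range (q.natDegree + 1),
      (q.coeff i : ℂ) • (fun θ : ℝ => ((cos θ : ℝ) : ℂ)) ^ i := by
    funext θ
    simp [TQ, Polynomial.eval_eq_sum_range]
  rw [this]
  refine Submodule.sum_mem _ fun i hi => Submodule.smul_mem _ _ ?_
  refine TP_mono ?_ (TP_pow cos_mem i)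
  have := Finset.mem_range.1 hi
  omega

lemma TQ_deriv (q : Polynomial ℝ) (θ : ℝ) :
    deriv (TQ q) θ = ((-((Polynomial.derivative q).eval (cos θ) * sin θ) : ℝ) : ℂ) := by
  have h1 : HasDerivAt (fun θ : ℝ => q.eval (cos θ))
      ((Polynomial.derivative q).eval (cos θ) * (-sin θ)) θ :=
    (q.hasDerivAt (cos θ)).comp θ (Real.hasDerivAt_cos θ)
  have h2 := h1.ofReal_comp.deriv
  rw [mul_neg] at h2
  exact h2

lemma w1 {p : ℝ≥0∞} (hp : 1 ≤ p) (α : ℝ) (q : Polynomial ℝ) :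
    wnorm p α (fun x => q.eval x) = eLpNorm (vv (2 * α + 1 / p.toReal) (TQ q)) p mH := by
  rw [wnorm_eq hp α q.continuous.measurable]
  refine eLpNorm_congr_norm_ae ?_
  filter_upwards [ae_restrict_mem measurableSet_Ioo] with θ hθ
  have hs : 0 < sin θ := Real.sin_pos_of_mem_Ioo hθ
  rw [Real.norm_of_nonneg (vv_nonneg ..), vv, TQ, norm_mul, abs_of_pos hs, Complex.norm_real,
    Real.norm_of_nonneg (Real.rpow_nonneg hs.le _), mul_comm]

lemma w2 {p : ℝ≥0∞} (hp : 1 ≤ p) (α : ℝ) (q : Polynomial ℝ) :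
    wnorm p (α + 1 / 2) (fun x => (Polynomial.derivative q).eval x) =
      eLpNorm (vv (2 * α + 1 / p.toReal) (deriv (TQ q))) p mH := by
  rw [wnorm_eq hp _ (Polynomial.derivative q).continuous.measurable]
  refine eLpNorm_congr_norm_ae ?_
  filter_upwards [ae_restrict_mem measurableSet_Ioo] with θ hθ
  have hs : 0 < sin θ := Real.sin_pos_of_mem_Ioo hθ
  rw [Real.norm_of_nonneg (vv_nonneg ..), vv, TQ_deriv, norm_mul, abs_of_pos hs, Complex.norm_real,
    Real.norm_of_nonneg (Real.rpow_nonneg hs.le _), norm_neg, norm_mul, Real.norm_of_nonneg hs.le,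
    show 2 * (α + 1 / 2) + 1 / p.toReal = 2 * α + 1 / p.toReal + 1 by ring,
    Real.rpow_add_one hs.ne']
  ring

lemma gg_up {n : ℕ} (hn : 0 < n) (β : ℝ) {r : ℝ} (hr : 0 ≤ r) (T : ℝ → ℂ) (p : ℝ≥0∞) :
    eLpNorm (gg n β T) p mP ≤ ENNReal.ofReal ((n:ℝ) ^ r) * eLpNorm (gg n (β + r) T) p mP := by
  have hn' : (0:ℝ) < n := by exact_mod_cast hn
  have h0 : (0:ℝ) ≤ (n:ℝ) ^ r := by positivity
  rw [← Real.enorm_eq_ofReal h0, ← eLpNorm_const_smul]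
  refine eLpNorm_mono fun θ => ?_
  rw [Real.norm_of_nonneg (gg_nonneg hn ..)]
  refine le_trans ?_ (le_abs_self _)
  have hb := ww_base_pos hn θ
  simp only [gg, ww, Pi.smul_apply, smul_eq_mul]
  rw [← mul_assoc]
  gcongr ?_ * _
  rw [Real.rpow_add hb, mul_left_comm, ← Real.mul_rpow hn'.le hb.le]
  refine le_mul_of_one_le_right (by positivity) (Real.one_le_rpow ?_ hr)
  have : (n:ℝ) * (1 / n) = 1 := by field_simp
  have h2 : 0 ≤ (n:ℝ) * |sin θ| := by positivity
  rw [mul_add]; linarith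

theorem main (p : ℝ≥0∞) (α ρ : ℝ) (hp : 1 ≤ p)
    (hα : (p ≠ ⊤ → -(1 / p.toReal) < α) ∧ (p = ⊤ → 0 ≤ α)) (hρ : 0 ≤ ρ) :
    ∃ C₁ > (0 : ℝ), ∃ C₂ > (0 : ℝ), ∀ n : ℕ, 1 ≤ n → ∀ q : Polynomial ℝ,
      q.natDegree ≤ n - 1 →
        wnorm p (α + 1 / 2) (fun x => (Polynomial.derivative q).eval x) ≤
            ENNReal.ofReal (C₁ * n) * wnorm p α (fun x => q.eval x) ∧
        wnorm p α (fun x => q.eval x) ≤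
            ENNReal.ofReal (C₂ * (n : ℝ) ^ (2 * ρ)) *
              wnorm p (α + ρ) (fun x => q.eval x) := by
  set β := 2 * α + 1 / p.toReal with hβ
  have hβ1 : p ≠ ⊤ → -(1 / p.toReal) < β := fun h => by have := hα.1 h; linarith
  have hβ2 : p = ⊤ → 0 ≤ β := fun h => by have := hα.2 h; rw [hβ, h]; simpa using this
  obtain ⟨A, hA, h1⟩ := E1 hp hβ1 hβ2
  obtain ⟨B, hB, h2⟩ := bern p hp β
  obtain ⟨D, hD, h3⟩ := E2 hp β
  obtain ⟨E, hE, h4⟩ := E2 hp (β + 2 * ρ)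
  refine ⟨A * B * D, by positivity, A * E, by positivity, fun n hn q hq => ?_⟩
  have hT : TQ q ∈ TP n := TQ_mem (by omega)
  have hev : ∀ θ, ‖TQ q (-θ)‖ = ‖TQ q θ‖ := fun θ => by simp [TQ]
  rw [w2 hp, w1 hp, w1 hp, show 2 * (α + ρ) + 1 / p.toReal = β + 2 * ρ by rw [hβ]; ring, ← hβ]
  constructor
  · calc _ ≤ _ := h1 n hn _ (TP_deriv hT).2
      _ ≤ ENNReal.ofReal A * (ENNReal.ofReal (B * n) *
          (ENNReal.ofReal D * eLpNorm (vv β (TQ q)) p mH)) := by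
          gcongr
          refine (h2 n hn _ hT).trans ?_
          gcongr
          exact h3 n hn _ hT hev
      _ = _ := by
          rw [← mul_assoc, ← mul_assoc, ← ENNReal.ofReal_mul hA.le,
            ← ENNReal.ofReal_mul (by positivity)]
          congr 2; ring
  · calc _ ≤ _ := h1 n hn _ hT
      _ ≤ ENNReal.ofReal A * (ENNReal.ofReal ((n:ℝ) ^ (2 * ρ)) *
          (ENNReal.ofReal E * eLpNorm (vv (β + 2 * ρ) (TQ q)) p mH)) := by
          gcongr
          refine (gg_up hn β (by positivity : 0 ≤ 2 * ρ) _ p).trans ?_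
          gcongr
          exact h4 n hn _ hT hev
      _ = _ := by
          rw [← mul_assoc, ← mul_assoc, ← ENNReal.ofReal_mul hA.le,
            ← ENNReal.ofReal_mul (by positivity)]
          congr 2; ring

end BM

theorem bernstein_markov (p : ℝ≥0∞) (α ρ : ℝ) (hp : 1 ≤ p)
    (hα : (p ≠ ⊤ → -(1 / p.toReal) < α) ∧ (p = ⊤ → 0 ≤ α)) (hρ : 0 ≤ ρ) :
    ∃ C₁ > (0 : ℝ), ∃ C₂ > (0 : ℝ), ∀ n : ℕ, 1 ≤ n → ∀ q : Polynomial ℝ,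
      q.natDegree ≤ n - 1 →
        wnorm p (α + 1 / 2) (fun x => (Polynomial.derivative q).eval x) ≤
            ENNReal.ofReal (C₁ * n) * wnorm p α (fun x => q.eval x) ∧
        wnorm p α (fun x => q.eval x) ≤
            ENNReal.ofReal (C₂ * (n : ℝ) ^ (2 * ρ)) *
              wnorm p (α + ρ) (fun x => q.eval x) := BM.main p α ρ hp hα hρ
end
end
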